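/- There exist a homogeneous system of parameters f_1, …, f_6 of S[W'^*]^G of degrees 2, 3, 3, 4, 6, 7 and homogeneous invariants g_1, …, g_18 ∈ S[W'^*]^G with g_1 = 1, of degrees 0, 4, 5, 5, 6, 7, 8, 9, 9, 10, 10, 11, 12, 13, 14, 14, 15, 19 respectively, such that S[W'^*]^G is a free F_2[f_1, …, f_6]-module with basis {g_1, …, g_18}. -/

import Mathlib

set_option synthInstance.maxHeartbeats 1000000
set_option maxHeartbeats 1000000

open MvPolynomial

/-- The field with two elements. -/
abbrev F2 := ZMod 2

/-- `G = GL₃(𝔽₂)`. -/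
abbrev G3 := GL (Fin 3) F2

/-- The generator `A` of `G`. -/
def Agen : G3 := ⟨!![1,0,1; 0,1,0; 0,0,1], !![1,0,1; 0,1,0; 0,0,1], by decide, by decide⟩

/-- The generator `B` of `G`. -/
def Bgen : G3 := ⟨!![0,0,1; 1,0,0; 0,1,0], !![0,1,0; 0,0,1; 1,0,0], by decide, by decide⟩

/-- The matrix `D(A)` of the action on `W'^* = 𝔽₂⁶`. -/
def DA6 : Matrix (Fin 6) (Fin 6) F2 :=
  !![1,0,1,0,0,1; 0,1,0,0,0,0; 0,0,1,0,0,0; 0,0,0,1,1,0; 0,0,0,0,1,0; 0,0,0,0,0,1]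

/-- The matrix `D(B)` of the action on `W'^* = 𝔽₂⁶`. -/
def DB6 : Matrix (Fin 6) (Fin 6) F2 :=
  !![0,0,1,0,0,0; 1,0,0,0,0,0; 0,1,0,0,0,0; 0,0,0,0,0,1; 0,0,0,1,0,0; 0,0,0,0,1,0]

/-- The algebra endomorphism of `S[W'^*] = 𝔽₂[a,b,c,d,e,f]` induced by the right action of
`σ` on the linear forms (coefficient row vectors are multiplied on the right by `D σ`; in
particular the variable `Xᵢ` is sent to the linear form given by the `i`-th row of `D σ`). -/
noncomputable def polyAct (D : G3 →* GL (Fin 6) F2) (σ : G3) :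
    MvPolynomial (Fin 6) F2 →ₐ[F2] MvPolynomial (Fin 6) F2 :=
  aeval (fun i => ∑ j, (D σ : Matrix (Fin 6) (Fin 6) F2) i j • X j)

/-- The invariant ring `S[W'^*]^H` for a subgroup `H ≤ G`. -/
noncomputable def invH (D : G3 →* GL (Fin 6) F2) (H : Subgroup G3) :
    Subalgebra F2 (MvPolynomial (Fin 6) F2) where
  carrier := {p | ∀ σ ∈ H, polyAct D σ p = p}
  mul_mem' := fun ha hb σ hσ => by rw [map_mul, ha σ hσ, hb σ hσ]
  add_mem' := fun ha hb σ hσ => by rw [map_add, ha σ hσ, hb σ hσ]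
  one_mem' := fun σ _ => map_one _
  zero_mem' := fun σ _ => map_zero _
  algebraMap_mem' := fun r σ _ => AlgHom.commutes _ r

/-- The invariant ring `S[W'^*]^G`. -/
noncomputable def invG (D : G3 →* GL (Fin 6) F2) :
    Subalgebra F2 (MvPolynomial (Fin 6) F2) :=
  invH D ⊤

/-!
The seven points `v` of the Fano plane give linear forms `pointForm v` that `G` permutes; they span
`W'^*` and sum to zero. Hence every invariant of degree at most `n` is the image, under the
substitution `x_v ↦ pointForm v + 1`, of an invariant of degree exactly `n` of the permutation
module `𝔽₂[x_v]`, so the invariants of degree at most `n` have dimension at most the number of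
`G`-orbits of exponents of degree `n`. By Burnside's lemma and a Molien-type identity this is also
the number of monomials `f^e gⱼ` of degree at most `n`, and it suffices to show that these monomials
are linearly independent. At a suitable point over `𝔽₂[t]/(t¹⁸ + t³ + 1)` the `fᵢ` take values in
`𝔽₂` and have an invertible Jacobian matrix while the values of the `gⱼ` are independent over `𝔽₂`;
expanding a relation `∑ Qⱼ(f) gⱼ = 0` to lowest order around this point shows that all `Qⱼ` vanish.
-/

section Deformation

variable {σ k A : Type*} [CommRing k] [CommRing A] [Algebra k A]

theorem dvd_aeval_add_mul_sub (x v : σ → A) (ε : A) (p : MvPolynomial σ k) :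
    ε ∣ aeval (fun i => x i + ε * v i) p - aeval x p := by
  let π := Ideal.Quotient.mkₐ k (Ideal.span {ε})
  have π_eps : π ε = 0 := Ideal.Quotient.eq_zero_iff_mem.2 (Ideal.mem_span_singleton_self ε)
  rw [← Ideal.mem_span_singleton, ← Ideal.Quotient.eq]
  change π _ = π _
  simp only [comp_aeval_apply, map_add, map_mul, π_eps, zero_mul, add_zero]

theorem exists_aeval_add_mul_eq [Fintype σ] (x v : σ → A) (ε : A) (p : MvPolynomial σ k) :
    ∃ r, aeval (fun i => x i + ε * v i) p
      = aeval x p + ε * ∑ j, aeval x (pderiv j p) * v j + ε ^ 2 * r := by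
  classical
  induction p using MvPolynomial.induction_on with
  | C a => exact ⟨0, by simp⟩
  | add p q hp hq =>
    obtain ⟨r, hr⟩ := hp
    obtain ⟨s, hs⟩ := hq
    refine ⟨r + s, ?_⟩
    simp only [map_add, hr, hs, add_mul, Finset.sum_add_distrib]
    ring
  | mul_X p i hp =>
    obtain ⟨r, hr⟩ := hp
    have leibniz : ∑ j, aeval x (pderiv j (p * X i)) * v j
        = aeval x p * v i + x i * ∑ j, aeval x (pderiv j p) * v j := by
      simp only [Derivation.leibniz, pderiv_X, Pi.single_apply, smul_eq_mul, mul_ite, mul_one,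
        mul_zero, map_add, map_mul, aeval_X, add_mul, Finset.sum_add_distrib, Finset.mul_sum,
        apply_ite (aeval x), map_zero, ite_mul, zero_mul, Finset.sum_ite_eq, Finset.mem_univ,
        if_true, mul_assoc]
    refine ⟨(∑ j, aeval x (pderiv j p) * v j) * v i + r * (x i + ε * v i), ?_⟩
    rw [leibniz, map_mul, map_mul, aeval_X, aeval_X, hr]
    ring

theorem aeval_const_mul_of_isHomogeneous {p : MvPolynomial σ k} {n : ℕ}
    (hp : p.IsHomogeneous n) (ε : A) (y : σ → A) :
    aeval (fun i => ε * y i) p = ε ^ n * aeval y p := by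
  rw [aeval_def, aeval_def, eval₂_eq, eval₂_eq, Finset.mul_sum]
  refine Finset.sum_congr rfl fun e he => ?_
  have he : ∑ i ∈ e.support, e i = n := by
    simpa [Finsupp.weight_apply, Finsupp.sum] using hp (mem_support_iff.mp he)
  simp only [mul_pow, Finset.prod_mul_distrib, Finset.prod_pow_eq_pow_sum, he]
  ring

theorem pow_succ_dvd_aeval_const_mul_sub {p : MvPolynomial σ k} {d : ℕ}
    (hp : ∀ e < d, homogeneousComponent e p = 0) (ε : A) (y z : σ → A) :
    ε ^ (d + 1) ∣ aeval (fun i => ε * (y i + ε * z i)) p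
      - ε ^ d * aeval y (homogeneousComponent d p) := by
  have component_dvd : ∀ e, ε ^ (d + 1) ∣
      aeval (fun i => ε * (y i + ε * z i)) (homogeneousComponent e p)
        - if e = d then ε ^ d * aeval y (homogeneousComponent d p) else 0 := by
    intro e
    rw [aeval_const_mul_of_isHomogeneous (homogeneousComponent_isHomogeneous e p)]
    rcases lt_trichotomy e d with h | rfl | h
    · simp [hp e h, h.ne]
    · rw [if_pos rfl, ← mul_sub, pow_succ]
      exact mul_dvd_mul_left _ (dvd_aeval_add_mul_sub y z ε _)
    · rw [if_neg h.ne', sub_zero]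
      exact (pow_dvd_pow ε h).mul_right _
  have leading : ∑ e ∈ Finset.range (p.totalDegree + 1),
      (if e = d then ε ^ d * aeval y (homogeneousComponent d p) else 0)
        = ε ^ d * aeval y (homogeneousComponent d p) := by
    rw [Finset.sum_ite_eq']
    refine ite_eq_left_iff.mpr fun h => ?_
    rw [Finset.mem_range] at h
    rw [homogeneousComponent_eq_zero d p (by lia), map_zero, mul_zero]
  conv_rhs => rw [← leading, ← sum_homogeneousComponent p, map_sum, sum_homogeneousComponent,
    ← Finset.sum_sub_distrib]
  exact Finset.dvd_sum fun e _ => component_dvd e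

theorem coeff_mul_of_leading_terms {R : Type*} [CommRing R] (a b : R) (q s : Polynomial R)
    (d : ℕ) : ((Polynomial.X ^ (d + 1) * q + Polynomial.X ^ d * Polynomial.C a)
      * (Polynomial.C b + Polynomial.X * s)).coeff d = b * a := by
  have product : (Polynomial.X ^ (d + 1) * q + Polynomial.X ^ d * Polynomial.C a)
      * (Polynomial.C b + Polynomial.X * s) = Polynomial.C (b * a) * Polynomial.X ^ d
        + (q * (Polynomial.C b + Polynomial.X * s) + Polynomial.C a * s)
          * Polynomial.X ^ (d + 1) := by
    rw [Polynomial.C_mul]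
    ring
  rw [product, Polynomial.coeff_add, Polynomial.coeff_C_mul_X_pow, if_pos rfl,
    Polynomial.coeff_mul_X_pow', if_neg (Nat.not_succ_le_self d), add_zero]

variable {K : Type*} [CommRing K] [Algebra k K]

theorem exists_aeval_algebraMap_add_mul_eq [Algebra K A] [IsScalarTower k K A] (ξ : σ → K)
    (v : σ → A) (ε : A) (p : MvPolynomial σ k) :
    ∃ r, aeval (fun i => algebraMap K A (ξ i) + ε * v i) p
      = algebraMap K A (aeval ξ p) + ε * r := by
  obtain ⟨r, hr⟩ := dvd_aeval_add_mul_sub (fun i => algebraMap K A (ξ i)) v ε p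
  have value : aeval (fun i => algebraMap K A (ξ i)) p = algebraMap K A (aeval ξ p) :=
    aeval_algebraMap_apply A ξ p
  exact ⟨r, by rw [← value, ← hr, add_sub_cancel]⟩

variable [Fintype σ] [DecidableEq σ]

theorem exists_aeval_eq_mul_add_of_jacobian_mul_eq_one [Algebra K A] [IsScalarTower k K A]
    {F : σ → MvPolynomial σ k} {ξ : σ → K} {N : Matrix σ σ K} (hF : ∀ i, aeval ξ (F i) = 0)
    (hJ : (Matrix.of fun i j => aeval ξ (pderiv j (F i))) * N = 1) (ε : A) (y : σ → A) (i : σ) :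
    ∃ r, aeval (fun i => algebraMap K A (ξ i) + ε * ∑ m, algebraMap K A (N i m) * y m) (F i)
      = ε * (y i + ε * r) := by
  obtain ⟨r, hr⟩ := exists_aeval_add_mul_eq (fun i => algebraMap K A (ξ i))
    (fun i => ∑ m, algebraMap K A (N i m) * y m) ε (F i)
  have aeval_ξ (p : MvPolynomial σ k) :
      aeval (fun i => algebraMap K A (ξ i)) p = algebraMap K A (aeval ξ p) :=
    aeval_algebraMap_apply A ξ p
  have entry (m : σ) : ∑ j, aeval ξ (pderiv j (F i)) * N j m = if i = m then 1 else 0 := by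
    simpa [Matrix.mul_apply, Matrix.one_apply] using congrFun (congrFun hJ i) m
  have first_order : ∑ j, algebraMap K A (aeval ξ (pderiv j (F i)))
      * ∑ m, algebraMap K A (N j m) * y m = y i := by
    simp only [Finset.mul_sum, ← mul_assoc, ← map_mul]
    rw [Finset.sum_comm]
    simp only [← Finset.sum_mul, ← map_sum, entry, apply_ite (algebraMap K A), map_one, map_zero,
      ite_mul, one_mul, zero_mul, Finset.sum_ite_eq, Finset.mem_univ, if_true]
  refine ⟨r, ?_⟩
  simp only [hr, aeval_ξ, first_order, hF, map_zero]
  ring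

variable {ι : Type*} [Fintype ι] {G : ι → MvPolynomial σ k} {ξ : σ → K}

/-- Expand the relation along `ξ + ε N y`, where `F i` becomes `ε (y i + O(ε))`: the lowest
homogeneous parts of the `Q j` satisfy a linear relation with coefficients `G j (ξ)`. -/
theorem eq_zero_of_sum_aeval_mul_eq_zero_of_aeval_eq_zero {F : σ → MvPolynomial σ k}
    {N : Matrix σ σ K} (hF : ∀ i, aeval ξ (F i) = 0)
    (hJ : (Matrix.of fun i j => aeval ξ (pderiv j (F i))) * N = 1)
    (hG : LinearIndependent k fun j => aeval ξ (G j))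
    {Q : ι → MvPolynomial σ k} (hQ : ∑ j, aeval F (Q j) * G j = 0) : Q = 0 := by
  let ε : Polynomial (MvPolynomial σ K) := Polynomial.X
  let y : σ → Polynomial (MvPolynomial σ K) := fun i => Polynomial.C (X i)
  choose r hr using exists_aeval_eq_mul_add_of_jacobian_mul_eq_one hF hJ ε y
  choose s hs using fun j => exists_aeval_algebraMap_add_mul_eq ξ
    (fun i => ∑ m, algebraMap K _ (N i m) * y m) ε (G j)
  have relation : ∑ j, aeval (fun i => ε * (y i + ε * r i)) (Q j)
      * aeval (fun i => algebraMap K _ (ξ i) + ε * ∑ m, algebraMap K _ (N i m) * y m) (G j)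
        = 0 := by
    simp_rw [← hr, ← comp_aeval_apply, ← map_mul, ← map_sum, hQ, map_zero]
  have aeval_y (p : MvPolynomial σ k) : aeval y p = Polynomial.C (map (algebraMap k K) p) := by
    rw [← aeval_X_left_apply (map (algebraMap k K) p), aeval_map_algebraMap]
    exact aeval_algebraMap_apply (Polynomial (MvPolynomial σ K)) (X : σ → MvPolynomial σ K) p
  suffices component_eq_zero : ∀ d j, homogeneousComponent d (Q j) = 0 by
    funext j
    rw [← sum_homogeneousComponent (Q j)]
    exact Finset.sum_eq_zero fun d _ => component_eq_zero d j
  intro d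
  induction d using Nat.strong_induction_on with
  | _ d ih =>
    choose q hq using fun j => pow_succ_dvd_aeval_const_mul_sub (fun e he => ih e he j) ε y r
    have leading : ∑ j, C (aeval ξ (G j)) * map (algebraMap k K) (homogeneousComponent d (Q j))
        = 0 := by
      rw [← Polynomial.coeff_zero d, ← relation, Polynomial.finsetSum_coeff]
      refine Finset.sum_congr rfl fun j _ => ?_
      rw [sub_eq_iff_eq_add.mp (hq j), hs, aeval_y]
      exact (coeff_mul_of_leading_terms _ _ _ _ d).symm
    intro j
    ext α
    refine Fintype.linearIndependent_iff.mp hG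
      (fun j => coeff α (homogeneousComponent d (Q j))) ?_ j
    simpa only [coeff_sum, coeff_C_mul, coeff_map, coeff_zero, Algebra.smul_def, mul_comm]
      using congrArg (coeff α) leading

theorem eq_zero_of_sum_aeval_mul_eq_zero {F : σ → MvPolynomial σ k} {c : σ → k}
    {N : Matrix σ σ K} (hF : ∀ i, aeval ξ (F i) = algebraMap k K (c i))
    (hJ : (Matrix.of fun i j => aeval ξ (pderiv j (F i))) * N = 1)
    (hG : LinearIndependent k fun j => aeval ξ (G j))
    {Q : ι → MvPolynomial σ k} (hQ : ∑ j, aeval F (Q j) * G j = 0) : Q = 0 := by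
  have translate_comp (c' : σ → k) (p : MvPolynomial σ k) :
      aeval (fun i => F i - C (c' i)) (aeval (fun i => X i + C (c' i)) p) = aeval F p := by
    simp only [comp_aeval_apply, map_add, aeval_X, algHom_C, algebraMap_eq, sub_add_cancel]
  have translated : (fun j => aeval (fun i => X i + C (c i)) (Q j)) = 0 :=
    eq_zero_of_sum_aeval_mul_eq_zero_of_aeval_eq_zero (F := fun i => F i - C (c i)) (N := N)
      (by simp [hF]) (by simpa using hJ) hG (by simpa only [translate_comp] using hQ)
  have untranslate (p : MvPolynomial σ k) :
      aeval (fun i => X i - C (c i)) (aeval (fun i => X i + C (c i)) p) = p := by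
    simp only [comp_aeval_apply, map_add, aeval_X, algHom_C, algebraMap_eq, sub_add_cancel,
      aeval_X_left_apply]
  funext j
  rw [← untranslate (Q j), congrFun translated j, Pi.zero_apply, map_zero]

end Deformation

section Counting

/-- The generating series `∑ₘ t^(wm)` of the powers of a variable of weight `w`. -/
noncomputable def geomSeries (w : ℕ) : PowerSeries ℤ :=
  PowerSeries.mk fun m => if w ∣ m then 1 else 0

theorem one_sub_X_pow_mul_geomSeries {w : ℕ} (hw : w ≠ 0) :
    (1 - PowerSeries.X ^ w) * geomSeries w = 1 := by
  ext m
  rw [sub_mul, one_mul, map_sub, PowerSeries.coeff_X_pow_mul', PowerSeries.coeff_one]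
  simp only [geomSeries, PowerSeries.coeff_mk]
  rcases Nat.eq_zero_or_pos m with rfl | hm
  · simp [hw]
  · rcases le_or_gt w m with h | h
    · simp [h, hm.ne', (Nat.dvd_sub_iff_left h dvd_rfl)]
    · simp [h.not_ge, hm.ne', Nat.not_dvd_of_pos_of_lt hm h]

/-- Exponents of monomials of weighted degree `n` in variables of weights `w`. -/
abbrev WeightedExponent {ι : Type*} (w : ι → ℕ) (n : ℕ) : Type _ :=
  {e : ι →₀ ℕ // Finsupp.weight w e = n}

theorem finite_weightedExponent {ι : Type*} [Finite ι] {w : ι → ℕ} (hw : ∀ i, w i ≠ 0) (n : ℕ) :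
    Finite (WeightedExponent w n) :=
  (Finsupp.finite_of_nat_weight_eq w hw n).to_subtype

theorem card_weightedExponent {ι : Type*} [Fintype ι] {w : ι → ℕ} (hw : ∀ i, w i ≠ 0) (n : ℕ) :
    (Nat.card (WeightedExponent w n) : ℤ) = PowerSeries.coeff n (∏ i, geomSeries (w i)) := by
  classical
  have coeff_eq : PowerSeries.coeff n (∏ i, geomSeries (w i))
      = Nat.card {l : ι →₀ ℕ // ∑ i, l i = n ∧ ∀ i, w i ∣ l i} := by
    rw [PowerSeries.coeff_prod]
    simp only [geomSeries, PowerSeries.coeff_mk, Finset.prod_ite_zero, Finset.prod_const_one]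
    rw [Finset.sum_boole, ← Nat.card_eq_finsetCard]
    congr 1
    exact Nat.card_congr (Equiv.subtypeEquivRight fun l => by simp)
  rw [coeff_eq, Nat.cast_inj]
  refine Nat.card_congr ⟨fun e => ⟨Finsupp.equivFunOnFinite.symm fun i => w i * e.1 i, ?_, by simp⟩,
    fun l => ⟨Finsupp.equivFunOnFinite.symm fun i => l.1 i / w i, ?_⟩, fun e => ?_, fun l => ?_⟩
  · simpa [Finsupp.weight_eq_sum, mul_comm] using e.2
  · rw [Finsupp.weight_eq_sum]
    exact (Finset.sum_congr rfl fun i _ => Nat.div_mul_cancel (l.2.2 i)).trans l.2.1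
  · exact Subtype.ext (Finsupp.ext fun i => Nat.mul_div_cancel_left _ (Nat.pos_of_ne_zero (hw i)))
  · exact Subtype.ext (Finsupp.ext fun i => Nat.mul_div_cancel' (l.2.2 i))

end Counting

section CycleType

open MulAction

variable {G α : Type*} [Group G] [MulAction G α]

theorem card_period_eq_one (g : G) :
    Nat.card {a : α // period g a = 1} = Nat.card (fixedBy α g) :=
  Nat.card_congr (Equiv.subtypeEquivRight fun _ => period_eq_one_iff)

variable [Finite α]

theorem card_orbit_zpowers_mk (g : G) (a : α) :
    Nat.card (orbitRel.Quotient.orbit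
      (Quotient.mk'' a : orbitRel.Quotient (Subgroup.zpowers g) α)) = period g a := by
  have := Fintype.ofFinite (orbit (Subgroup.zpowers g) a)
  rw [orbitRel.Quotient.orbit_mk, period_eq_minimalPeriod, minimalPeriod_eq_card,
    Nat.card_eq_fintype_card]

theorem card_period_eq_mul_card_orbits (g : G) (ℓ : ℕ) :
    Nat.card {a : α // period g a = ℓ} = ℓ *
      Nat.card {c : orbitRel.Quotient (Subgroup.zpowers g) α // Nat.card c.orbit = ℓ} := by
  classical
  let toOrbit (a : {a : α // period g a = ℓ}) :
      {c : orbitRel.Quotient (Subgroup.zpowers g) α // Nat.card c.orbit = ℓ} :=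
    ⟨Quotient.mk'' a.1, (card_orbit_zpowers_mk g a.1).trans a.2⟩
  have card_fiber (c) : Nat.card {a // toOrbit a = c} = ℓ := by
    let e : {a // toOrbit a = c} ≃ c.1.orbit := by
      refine ⟨fun a => ⟨a.1.1, ?_⟩, fun a => ⟨⟨a.1, ?_⟩, ?_⟩, fun _ => rfl, fun _ => rfl⟩
      · rw [orbitRel.Quotient.mem_orbit]
        exact congrArg Subtype.val a.2
      · rw [← card_orbit_zpowers_mk, orbitRel.Quotient.mem_orbit.1 a.2, c.2]
      · exact Subtype.ext (orbitRel.Quotient.mem_orbit.1 a.2)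
    exact (Nat.card_congr e).trans c.2
  have := Fintype.ofFinite {c : orbitRel.Quotient (Subgroup.zpowers g) α // Nat.card c.orbit = ℓ}
  rw [← Nat.card_congr (Equiv.sigmaFiberEquiv toOrbit), Nat.card_sigma]
  simp only [card_fiber, Finset.sum_const, Finset.card_univ, smul_eq_mul,
    Nat.card_eq_fintype_card, mul_comm]

theorem prod_card_orbit [Finite G] (g : G) {M : Type*} [CommMonoid M] (F : ℕ → M)
    [Fintype (orbitRel.Quotient (Subgroup.zpowers g) α)] :
    ∏ c : orbitRel.Quotient (Subgroup.zpowers g) α, F (Nat.card c.orbit)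
      = ∏ ℓ ∈ (orderOf g).divisors, F ℓ ^ (Nat.card {a : α // period g a = ℓ} / ℓ) := by
  classical
  have card_mem (c : orbitRel.Quotient (Subgroup.zpowers g) α) :
      Nat.card c.orbit ∈ (orderOf g).divisors := by
    induction c using Quotient.inductionOn' with
    | h a =>
      exact Nat.mem_divisors.2 ⟨card_orbit_zpowers_mk g a ▸ period_dvd_orderOf g a,
        (orderOf_pos g).ne'⟩
  rw [← Finset.prod_fiberwise_of_maps_to' fun c _ => card_mem c]
  refine Finset.prod_congr rfl fun ℓ hℓ => ?_
  rw [Finset.prod_const, card_period_eq_mul_card_orbits,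
    Nat.mul_div_cancel_left _ (Nat.pos_of_mem_divisors hℓ), Nat.card_eq_fintype_card,
    Fintype.card_subtype]

theorem card_period_eq_prime_pow_succ {p : ℕ} (hp : p.Prime) (g : G) (i : ℕ) :
    Nat.card {a : α // period g a = p ^ (i + 1)}
      = Nat.card (fixedBy α (g ^ p ^ (i + 1))) - Nat.card (fixedBy α (g ^ p ^ i)) := by
  have period_eq_iff (a : α) : period g a = p ^ (i + 1)
      ↔ a ∈ fixedBy α (g ^ p ^ (i + 1)) \ fixedBy α (g ^ p ^ i) := by
    simp only [Set.mem_sdiff, mem_fixedBy, pow_smul_eq_iff_period_dvd]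
    refine ⟨fun h => h ▸ ⟨dvd_rfl, fun h' => ?_⟩,
      fun h => Nat.eq_prime_pow_of_dvd_least_prime_pow hp h.2 h.1⟩
    exact (Nat.pow_lt_pow_right hp.one_lt i.lt_succ_self).not_ge
      (Nat.le_of_dvd (pow_pos hp.pos i) (h ▸ h'))
  have subset : fixedBy α (g ^ p ^ i) ⊆ fixedBy α (g ^ p ^ (i + 1)) := by
    intro a ha
    rw [mem_fixedBy, pow_smul_eq_iff_period_dvd] at ha ⊢
    exact ha.trans (pow_dvd_pow p i.le_succ)
  rw [Nat.card_congr (Equiv.subtypeEquivRight period_eq_iff)]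
  simp only [Nat.card_coe_set_eq]
  exact Set.ncard_sdiff subset

theorem prod_divisors_card_period {p k : ℕ} (hp : p.Prime) {g : G} (hg : orderOf g = p ^ k)
    {M : Type*} [CommMonoid M] (F : ℕ → M) :
    ∏ ℓ ∈ (orderOf g).divisors, F ℓ ^ (Nat.card {a : α // period g a = ℓ} / ℓ)
      = (∏ i ∈ Finset.range k, F (p ^ (i + 1)) ^ ((Nat.card (fixedBy α (g ^ p ^ (i + 1)))
          - Nat.card (fixedBy α (g ^ p ^ i))) / p ^ (i + 1))) * F 1 ^ Nat.card (fixedBy α g) := by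
  rw [hg, Nat.prod_divisors_prime_pow hp, Finset.prod_range_succ', pow_zero, card_period_eq_one,
    Nat.div_one]
  exact congrArg (· * _) (Finset.prod_congr rfl fun i _ => by rw [card_period_eq_prime_pow_succ hp])

end CycleType

section PermutationInvariants

open MulAction

variable {G α : Type*} [Group G] [MulAction G α]

noncomputable instance (n : ℕ) : MulAction G (WeightedExponent (1 : α → ℕ) n) where
  smul g e := ⟨e.1.mapDomain (g • ·), by
    have weight_one (f : α →₀ ℕ) : Finsupp.weight 1 f = f.degree :=
      (DFunLike.congr_fun Finsupp.degree_eq_weight_one f).symm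
    rw [weight_one, Finsupp.degree_mapDomain, ← weight_one, e.2]⟩
  one_smul e := Subtype.ext (by
    change e.1.mapDomain ((1 : G) • ·) = e.1
    simp only [one_smul]
    exact Finsupp.mapDomain_id)
  mul_smul g h e := Subtype.ext (by
    change e.1.mapDomain ((g * h) • ·) = (e.1.mapDomain (h • ·)).mapDomain (g • ·)
    rw [← Finsupp.mapDomain_comp]
    simp only [Function.comp_def, mul_smul])

theorem smul_weightedExponent_apply {n : ℕ} (g : G) (e : WeightedExponent (1 : α → ℕ) n) (a : α) :
    (g • e).1 (g • a) = e.1 a :=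
  Finsupp.mapDomain_apply (MulAction.injective g) e.1 a

theorem mem_fixedBy_weightedExponent_iff {n : ℕ} {g : G} {e : WeightedExponent (1 : α → ℕ) n} :
    e ∈ fixedBy (WeightedExponent (1 : α → ℕ) n) g ↔ ∀ a, e.1 (g • a) = e.1 a := by
  refine ⟨fun h a => ?_, fun h => Subtype.ext (Finsupp.ext fun a => ?_)⟩
  · rw [← smul_weightedExponent_apply g e a, mem_fixedBy.1 h]
  · rw [← smul_inv_smul g a, smul_weightedExponent_apply, h]

theorem sum_orbitRel_mk [Fintype α] [Fintype (orbitRel.Quotient G α)]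
    (f : orbitRel.Quotient G α → ℕ) :
    ∑ a : α, f (Quotient.mk'' a) = ∑ c, f c * Nat.card c.orbit := by
  classical
  rw [← Finset.sum_fiberwise' Finset.univ fun a => (Quotient.mk'' a : orbitRel.Quotient G α)]
  refine Finset.sum_congr rfl fun c _ => ?_
  rw [Finset.sum_const, smul_eq_mul, mul_comm, ← Fintype.card_subtype, ← Nat.card_eq_fintype_card]
  exact congrArg _ (Nat.card_congr (Equiv.subtypeEquivRight fun a =>
    orbitRel.Quotient.mem_orbit.symm))

theorem card_fixedBy_weightedExponent [Finite α] (g : G) (n : ℕ) :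
    Nat.card (fixedBy (WeightedExponent (1 : α → ℕ) n) g)
      = Nat.card (WeightedExponent
          (fun c : orbitRel.Quotient (Subgroup.zpowers g) α => Nat.card c.orbit) n) := by
  have := Fintype.ofFinite α
  have := Fintype.ofFinite (orbitRel.Quotient (Subgroup.zpowers g) α)
  have weight_eq (e : α →₀ ℕ) (l : orbitRel.Quotient (Subgroup.zpowers g) α →₀ ℕ)
      (h : ∀ a, e a = l (Quotient.mk'' a)) :
      Finsupp.weight 1 e = Finsupp.weight (fun c => Nat.card c.orbit) l := by
    simp only [Finsupp.weight_eq_sum, Pi.one_apply, smul_eq_mul, mul_one, h]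
    exact sum_orbitRel_mk l
  have apply_eq {e} (he : e ∈ fixedBy (WeightedExponent (1 : α → ℕ) n) g) {a b : α}
      (hab : (Quotient.mk'' a : orbitRel.Quotient (Subgroup.zpowers g) α) = Quotient.mk'' b) :
      e.1 a = e.1 b := by
    obtain ⟨⟨_, m, rfl⟩, rfl⟩ := Quotient.exact' hab
    have hm : e ∈ fixedBy (WeightedExponent (1 : α → ℕ) n) (g ^ m) :=
      fixedBy_subset_fixedBy_zpow _ _ _ he
    exact mem_fixedBy_weightedExponent_iff.1 hm b
  refine Nat.card_congr ⟨fun e => ⟨Finsupp.equivFunOnFinite.symm fun c => e.1.1 c.out, ?_⟩,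
    fun l => ⟨⟨Finsupp.equivFunOnFinite.symm fun a => l.1 (Quotient.mk'' a), ?_⟩, ?_⟩,
    fun e => ?_, fun l => ?_⟩
  · rw [← weight_eq e.1.1]
    · exact e.1.2
    · exact fun a => apply_eq e.2 (Quotient.out_eq' _).symm
  · exact (weight_eq _ l.1 fun _ => rfl).trans l.2
  · refine mem_fixedBy_weightedExponent_iff.2 fun a => congrArg l.1 (Quotient.sound' ?_)
    exact ⟨⟨g, Subgroup.mem_zpowers g⟩, rfl⟩
  · exact Subtype.ext (Subtype.ext (Finsupp.ext fun a => apply_eq e.2 (Quotient.out_eq' _)))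
  · exact Subtype.ext (Finsupp.ext fun c => congrArg l.1 (Quotient.out_eq' c))

theorem card_orbits_weightedExponent_mul_card [Finite α] [Fintype G] (n : ℕ) :
    ((Nat.card (orbitRel.Quotient G (WeightedExponent (1 : α → ℕ) n)) * Nat.card G : ℕ) : ℤ)
      = ∑ g : G, PowerSeries.coeff n (∏ ℓ ∈ (orderOf g).divisors,
          geomSeries ℓ ^ (Nat.card {a : α // period g a = ℓ} / ℓ)) := by
  classical
  have := finite_weightedExponent (w := (1 : α → ℕ)) (fun _ => one_ne_zero) n
  have := Fintype.ofFinite (WeightedExponent (1 : α → ℕ) n)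
  have := Fintype.ofFinite (orbitRel.Quotient G (WeightedExponent (1 : α → ℕ) n))
  have (g : G) := Fintype.ofFinite (fixedBy (WeightedExponent (1 : α → ℕ) n) g)
  rw [Nat.card_eq_fintype_card, Nat.card_eq_fintype_card,
    ← sum_card_fixedBy_eq_card_orbits_mul_card_group, Nat.cast_sum]
  refine Finset.sum_congr rfl fun g _ => ?_
  have := Fintype.ofFinite (orbitRel.Quotient (Subgroup.zpowers g) α)
  rw [← Nat.card_eq_fintype_card, card_fixedBy_weightedExponent, card_weightedExponent,
    prod_card_orbit g geomSeries]
  intro c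
  induction c using Quotient.inductionOn' with
  | h a =>
    exact (card_orbit_zpowers_mk g a).trans_ne (period_pos_of_orderOf_pos (orderOf_pos g) a).ne'

variable (G α) in
/-- The space of homogeneous polynomials of degree `n` in variables indexed by `α` that are
invariant under the permutation action of `G` on the variables. -/
def permInvariants (k : Type*) [CommSemiring k] (n : ℕ) : Submodule k (MvPolynomial α k) where
  carrier := {p | p.IsHomogeneous n ∧ ∀ g : G, rename (g • ·) p = p}
  add_mem' hp hq := ⟨hp.1.add hq.1, fun g => by rw [map_add, hp.2, hq.2]⟩
  zero_mem' := ⟨isHomogeneous_zero _ _ _, fun g => map_zero _⟩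
  smul_mem' c p hp := ⟨(homogeneousSubmodule α k n).smul_mem c hp.1, fun g => by
    rw [map_smul, hp.2]⟩

variable (G α) in
/-- The linear map reading off one coefficient of a polynomial for each orbit of exponents; on
invariant polynomials it loses no information. -/
noncomputable def orbitCoeff (k : Type*) [CommSemiring k] (n : ℕ) :
    permInvariants G α k n →ₗ[k] (orbitRel.Quotient G (WeightedExponent (1 : α → ℕ) n) → k) :=
  LinearMap.pi fun ω => (lcoeff k ω.out.1).comp (Submodule.subtype _)

theorem orbitCoeff_injective (k : Type*) [CommRing k] (n : ℕ) :
    Function.Injective (orbitCoeff G α k n) := by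
  refine (injective_iff_map_eq_zero _).2 fun p hp => Subtype.ext (MvPolynomial.ext _ _ fun e => ?_)
  rw [ZeroMemClass.coe_zero, coeff_zero]
  by_contra he
  let e' : WeightedExponent (1 : α → ℕ) n := ⟨e, p.2.1 he⟩
  obtain ⟨g, hg⟩ := orbitRel_apply.1 (Quotient.mk_out (s := orbitRel G _) e')
  have coeff_smul : coeff (g • e').1 p.1 = 0 :=
    (congrArg (fun d : WeightedExponent (1 : α → ℕ) n => coeff d.1 p.1) hg).trans
      (congrFun hp (Quotient.mk'' e'))
  rw [← p.2.2 g] at coeff_smul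
  exact he ((coeff_rename_mapDomain _ (MulAction.injective g) _ _).symm.trans coeff_smul)

instance [Finite α] (k : Type*) [Field k] (n : ℕ) :
    FiniteDimensional k (permInvariants G α k n) :=
  have := finite_weightedExponent (w := (1 : α → ℕ)) (fun _ => one_ne_zero) n
  Module.Finite.of_injective _ (orbitCoeff_injective k n)

theorem finrank_permInvariants_le [Finite α] (k : Type*) [Field k] (n : ℕ) :
    Module.finrank k (permInvariants G α k n)
      ≤ Nat.card (orbitRel.Quotient G (WeightedExponent (1 : α → ℕ) n)) := by
  have := finite_weightedExponent (w := (1 : α → ℕ)) (fun _ => one_ne_zero) n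
  have := Fintype.ofFinite (orbitRel.Quotient G (WeightedExponent (1 : α → ℕ) n))
  rw [Nat.card_eq_fintype_card, ← Module.finrank_fintype_fun_eq_card k]
  exact LinearMap.finrank_le_finrank_of_injective (orbitCoeff_injective k n)

end PermutationInvariants

section GroupOrder

open MulAction Matrix

/-- The seven nonzero row vectors of `𝔽₂³`, i.e. the points of the Fano plane. -/
abbrev Point := {v : Fin 3 → F2 // v ≠ 0}

theorem vecMul_ne_zero {n R : Type*} [Fintype n] [DecidableEq n] [CommRing R] {v : n → R}
    (hv : v ≠ 0) (σ : GL n R) : v ᵥ* (σ : Matrix n n R) ≠ 0 := fun h =>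
  hv (by simpa [vecMul_vecMul, ← Units.val_mul] using congrArg (· ᵥ* (↑σ⁻¹ : Matrix n n R)) h)

/-- `G` acts naturally on row vectors from the right, which the inverse turns into a left action. -/
instance : MulAction G3 Point where
  smul σ v := ⟨v.1 ᵥ* (↑σ⁻¹ : Matrix (Fin 3) (Fin 3) F2), vecMul_ne_zero v.2 _⟩
  one_smul v := Subtype.ext (by
    change v.1 ᵥ* (↑(1 : G3)⁻¹ : Matrix (Fin 3) (Fin 3) F2) = v.1
    rw [inv_one, Units.val_one, vecMul_one])
  mul_smul σ τ v := Subtype.ext (by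
    change v.1 ᵥ* (↑(σ * τ)⁻¹ : Matrix (Fin 3) (Fin 3) F2)
      = (v.1 ᵥ* (↑τ⁻¹ : Matrix (Fin 3) (Fin 3) F2)) ᵥ* (↑σ⁻¹ : Matrix (Fin 3) (Fin 3) F2)
    rw [_root_.mul_inv_rev, Units.val_mul, vecMul_vecMul])

theorem coe_inv_smul (σ : G3) (v : Point) :
    (σ⁻¹ • v).1 = v.1 ᵥ* (σ : Matrix (Fin 3) (Fin 3) F2) := by
  change v.1 ᵥ* (↑σ⁻¹⁻¹ : Matrix (Fin 3) (Fin 3) F2) = _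
  rw [inv_inv]

theorem mem_fixedBy_point_iff {σ : G3} {v : Point} :
    v ∈ fixedBy Point σ ↔ v.1 ᵥ* (σ : Matrix (Fin 3) (Fin 3) F2) = v.1 := by
  rw [← coe_inv_smul, ← Subtype.ext_iff, mem_fixedBy, inv_smul_eq_iff, eq_comm]

theorem card_fixedBy_point (σ : G3) : Nat.card (fixedBy Point σ)
    = Fintype.card {v : Point // v.1 ᵥ* (σ : Matrix (Fin 3) (Fin 3) F2) = v.1} := by
  rw [← Nat.card_eq_fintype_card]
  exact Nat.card_congr (Equiv.subtypeEquivRight fun v => mem_fixedBy_point_iff)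

theorem pow_eq_one_of_det_ne_zero : ∀ M : Matrix (Fin 3) (Fin 3) F2, M.det ≠ 0 →
    M ^ 3 = 1 ∨ M ^ 4 = 1 ∨ M ^ 7 = 1 := by
  decide +kernel

theorem card_fixed_of_pow_eq_one : ∀ M : Matrix (Fin 3) (Fin 3) F2,
    (M = 1 → Fintype.card {v : Point // v.1 ᵥ* M = v.1} = 7) ∧
    (M ^ 2 = 1 → M ≠ 1 → Fintype.card {v : Point // v.1 ᵥ* M = v.1} = 3) ∧
    (M ^ 3 = 1 → M ≠ 1 → Fintype.card {v : Point // v.1 ᵥ* M = v.1} = 1) ∧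
    (M ^ 4 = 1 → M ^ 2 ≠ 1 → Fintype.card {v : Point // v.1 ᵥ* M = v.1} = 1) ∧
    (M ^ 7 = 1 → M ≠ 1 → Fintype.card {v : Point // v.1 ᵥ* M = v.1} = 0) := by
  decide +kernel

theorem card_matrix_pow_eq_one :
    (Finset.univ.filter fun M : Matrix (Fin 3) (Fin 3) F2 => M ^ 2 = 1).card = 22 ∧
    (Finset.univ.filter fun M : Matrix (Fin 3) (Fin 3) F2 => M ^ 3 = 1).card = 57 ∧
    (Finset.univ.filter fun M : Matrix (Fin 3) (Fin 3) F2 => M ^ 4 = 1).card = 64 ∧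
    (Finset.univ.filter fun M : Matrix (Fin 3) (Fin 3) F2 => M ^ 7 = 1).card = 49 := by
  decide +kernel

theorem card_units_pow_eq_one {M : Type*} [Monoid M] [Fintype M] [DecidableEq M] [Fintype Mˣ]
    [DecidableEq Mˣ] {n : ℕ} (hn : n ≠ 0) :
    (Finset.univ.filter fun u : Mˣ => u ^ n = 1).card
      = (Finset.univ.filter fun m : M => m ^ n = 1).card := by
  refine Finset.card_bij (fun u _ => u) (fun u hu => ?_) (fun _ _ _ _ => Units.ext) fun m hm => ?_
  · simpa [Units.ext_iff] using hu
  · exact ⟨Units.ofPowEqOne m n (Finset.mem_filter.1 hm).2 hn, by simp, rfl⟩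

theorem orderOf_mem (σ : G3) : orderOf σ ∈ ({1, 2, 3, 4, 7} : Finset ℕ) := by
  have dvd_of_coe_pow {n : ℕ} (h : (σ : Matrix (Fin 3) (Fin 3) F2) ^ n = 1) : orderOf σ ∣ n :=
    orderOf_dvd_of_pow_eq_one (Units.ext h)
  have hdvd : orderOf σ ∈ Nat.divisors 3 ∪ Nat.divisors 4 ∪ Nat.divisors 7 := by
    simp only [Finset.mem_union, Nat.mem_divisors, or_assoc]
    exact (pow_eq_one_of_det_ne_zero σ.1 (isUnits_det_units σ).ne_zero).imp
      (⟨dvd_of_coe_pow ·, by decide⟩)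
      (Or.imp (⟨dvd_of_coe_pow ·, by decide⟩) (⟨dvd_of_coe_pow ·, by decide⟩))
  exact (by decide : Nat.divisors 3 ∪ Nat.divisors 4 ∪ Nat.divisors 7 ⊆ {1, 2, 3, 4, 7}) hdvd

theorem card_orderOf_eq :
    (Finset.univ.filter fun σ : G3 => orderOf σ = 1).card = 1 ∧
    (Finset.univ.filter fun σ : G3 => orderOf σ = 2).card = 21 ∧
    (Finset.univ.filter fun σ : G3 => orderOf σ = 3).card = 56 ∧
    (Finset.univ.filter fun σ : G3 => orderOf σ = 4).card = 42 ∧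
    (Finset.univ.filter fun σ : G3 => orderOf σ = 7).card = 48 := by
  have c₁ : (Finset.univ.filter fun σ : G3 => orderOf σ = 1).card = 1 := by
    simp [orderOf_eq_one_iff, Finset.filter_eq']
  obtain ⟨c₂, c₃, c₄, c₇⟩ := card_matrix_pow_eq_one
  simp only [← card_units_pow_eq_one (M := Matrix (Fin 3) (Fin 3) F2) (OfNat.ofNat_ne_zero _),
    ← sum_card_orderOf_eq_card_pow_eq_one (OfNat.ofNat_ne_zero _),
    show Nat.divisors 2 = {1, 2} by decide, show Nat.divisors 3 = {1, 3} by decide,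
    show Nat.divisors 4 = {1, 2, 4} by decide, show Nat.divisors 7 = {1, 7} by decide]
    at c₂ c₃ c₄ c₇
  obtain ⟨c, hc⟩ : ∃ c : ℕ → ℕ,
    ∀ n, (Finset.univ.filter fun σ : G3 => orderOf σ = n).card = c n := ⟨_, fun _ => rfl⟩
  simp only [hc] at c₁ c₂ c₃ c₄ c₇ ⊢
  norm_num [c₁] at c₂ c₃ c₄ c₇
  lia

theorem sum_apply_orderOf {R : Type*} [CommSemiring R] (φ : ℕ → R) :
    ∑ σ : G3, φ (orderOf σ) = φ 1 + 21 * φ 2 + 56 * φ 3 + 42 * φ 4 + 48 * φ 7 := by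
  have sum_eq : ∑ σ : G3, φ (orderOf σ) = ∑ n ∈ {1, 2, 3, 4, 7},
      (Finset.univ.filter fun σ : G3 => orderOf σ = n).card • φ n := by
    rw [← Finset.sum_fiberwise_of_maps_to' fun σ _ => orderOf_mem σ]
    exact Finset.sum_congr rfl fun n _ => Finset.sum_const _
  obtain ⟨c, hc⟩ : ∃ c : ℕ → ℕ,
    ∀ n, (Finset.univ.filter fun σ : G3 => orderOf σ = n).card = c n := ⟨_, fun _ => rfl⟩
  obtain ⟨c₁, c₂, c₃, c₄, c₇⟩ := card_orderOf_eq
  simp only [hc] at sum_eq c₁ c₂ c₃ c₄ c₇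
  simp [sum_eq, c₁, c₂, c₃, c₄, c₇, add_assoc]

theorem card_G3 : Nat.card G3 = 168 := by
  rw [Nat.card_eq_fintype_card, Fintype.card_eq_sum_ones]
  exact sum_apply_orderOf fun _ => 1

/-- The product of the series `geomSeries` over the cycle lengths on `Point` of an element of `G`
of order `n`; the order determines the cycle type. -/
noncomputable def cycleSeries : ℕ → PowerSeries ℤ
  | 1 => geomSeries 1 ^ 7
  | 2 => geomSeries 1 ^ 3 * geomSeries 2 ^ 2
  | 3 => geomSeries 1 * geomSeries 3 ^ 2
  | 4 => geomSeries 1 * geomSeries 2 * geomSeries 4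
  | 7 => geomSeries 7
  | _ => 0

theorem card_fixedBy_of_orderOf_eq {σ : G3} :
    (orderOf σ = 1 → Nat.card (fixedBy Point σ) = 7) ∧
    (orderOf σ = 2 → Nat.card (fixedBy Point σ) = 3) ∧
    (orderOf σ = 3 → Nat.card (fixedBy Point σ) = 1) ∧
    (orderOf σ = 4 → Nat.card (fixedBy Point σ) = 1) ∧
    (orderOf σ = 7 → Nat.card (fixedBy Point σ) = 0) := by
  obtain ⟨c₁, c₂, c₃, c₄, c₇⟩ := card_fixed_of_pow_eq_one σ
  have coe_pow {n : ℕ} (h : orderOf σ ∣ n) : (σ : Matrix (Fin 3) (Fin 3) F2) ^ n = 1 :=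
    congrArg Units.val (orderOf_dvd_iff_pow_eq_one.1 h)
  have coe_pow_ne {n : ℕ} (h : ¬ orderOf σ ∣ n) : (σ : Matrix (Fin 3) (Fin 3) F2) ^ n ≠ 1 :=
    fun hn => h (orderOf_dvd_of_pow_eq_one (Units.ext hn))
  rw [card_fixedBy_point]
  have hne (h : orderOf σ ≠ 1) : (σ : Matrix (Fin 3) (Fin 3) F2) ≠ 1 := by
    simpa using coe_pow_ne (mt Nat.dvd_one.1 h)
  exact ⟨fun h => c₁ (by simpa using coe_pow h.dvd),
    fun h => c₂ (coe_pow h.dvd) (hne (by lia)), fun h => c₃ (coe_pow h.dvd) (hne (by lia)),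
    fun h => c₄ (coe_pow h.dvd) (coe_pow_ne (by rw [h]; decide)),
    fun h => c₇ (coe_pow h.dvd) (hne (by lia))⟩

theorem prod_geomSeries_eq_cycleSeries (σ : G3) :
    ∏ ℓ ∈ (orderOf σ).divisors, geomSeries ℓ ^ (Nat.card {v : Point // period σ v = ℓ} / ℓ)
      = cycleSeries (orderOf σ) := by
  obtain ⟨-, f₂, f₃, f₄, f₇⟩ := card_fixedBy_of_orderOf_eq (σ := σ)
  have fix_one : Nat.card (fixedBy Point (1 : G3)) = 7 := card_fixedBy_of_orderOf_eq.1 orderOf_one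
  have pow_order {m : ℕ} (h : orderOf σ = m) : σ ^ m = 1 := h ▸ pow_orderOf_eq_one σ
  have hσ := orderOf_mem σ
  simp only [Finset.mem_insert, Finset.mem_singleton] at hσ
  rcases hσ with h | h | h | h | h
  · rw [prod_divisors_card_period (p := 2) (k := 0) Nat.prime_two h, h, orderOf_eq_one_iff.1 h]
    simp only [Finset.range_zero, Finset.prod_empty, fix_one, one_mul, cycleSeries]
  · rw [prod_divisors_card_period (p := 2) (k := 1) Nat.prime_two h, h]
    simp only [Finset.prod_range_succ, Finset.range_zero, Finset.prod_empty, zero_add,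
      pow_zero, pow_one, fix_one, pow_order h, f₂ h, cycleSeries]
    norm_num [mul_comm]
  · rw [prod_divisors_card_period (p := 3) (k := 1) Nat.prime_three h, h]
    simp only [Finset.prod_range_succ, Finset.range_zero, Finset.prod_empty, zero_add,
      pow_zero, pow_one, fix_one, pow_order h, f₃ h, cycleSeries]
    norm_num [mul_comm]
  · have f_sq : Nat.card (fixedBy Point (σ ^ 2)) = 3 :=
      card_fixedBy_of_orderOf_eq.2.1 (by rw [orderOf_pow_of_dvd two_ne_zero (h ▸ by decide), h])
    have pow_four : σ ^ 2 ^ 2 = 1 := pow_order h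
    rw [prod_divisors_card_period (p := 2) (k := 2) Nat.prime_two h, h]
    simp only [Finset.prod_range_succ, Finset.range_zero, Finset.prod_empty, zero_add,
      one_add_one_eq_two, pow_zero, pow_one, fix_one, pow_four, f_sq, f₄ h, cycleSeries]
    norm_num [mul_comm, mul_assoc]
  · rw [prod_divisors_card_period (p := 7) (k := 1) (by decide) h, h]
    simp only [Finset.prod_range_succ, Finset.range_zero, Finset.prod_empty, zero_add,
      pow_zero, pow_one, fix_one, pow_order h, f₇ h, cycleSeries]
    norm_num

end GroupOrder

section Molien

/-- The degrees of the primary invariants `f₁, …, f₆`. -/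
def primDeg : Fin 6 → ℕ := ![2, 3, 3, 4, 6, 7]

/-- The degrees of the secondary invariants `g₁, …, g₁₈`. -/
def secDeg : Fin 18 → ℕ := ![0, 4, 5, 5, 6, 7, 8, 9, 9, 10, 10, 11, 12, 13, 14, 14, 15, 19]

theorem primDeg_ne_zero : ∀ i, primDeg i ≠ 0 := by decide

theorem molien_identity_of_field {K : Type*} [Field K] {x : K} (h₁ : 1 - x ≠ 0)
    (h₂ : 1 - x ^ 2 ≠ 0) (h₃ : 1 - x ^ 3 ≠ 0) (h₄ : 1 - x ^ 4 ≠ 0) (h₆ : 1 - x ^ 6 ≠ 0)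
    (h₇ : 1 - x ^ 7 ≠ 0) :
    (∑ j, x ^ secDeg j) * ((1 - x)⁻¹ * ∏ i, (1 - x ^ primDeg i)⁻¹) * 168
      = (1 - x)⁻¹ ^ 7 + 21 * ((1 - x)⁻¹ ^ 3 * (1 - x ^ 2)⁻¹ ^ 2)
        + 56 * ((1 - x)⁻¹ * (1 - x ^ 3)⁻¹ ^ 2) + 42 * ((1 - x)⁻¹ * (1 - x ^ 2)⁻¹ * (1 - x ^ 4)⁻¹)
        + 48 * (1 - x ^ 7)⁻¹ := by
  simp only [Fin.sum_univ_succ, Fin.prod_univ_succ, secDeg, primDeg, Fin.sum_univ_zero,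
    Fin.prod_univ_zero, Matrix.cons_val_zero, Matrix.cons_val_succ, pow_zero]
  field_simp
  ring

theorem molien_identity :
    (∑ j, PowerSeries.X ^ secDeg j) * (geomSeries 1 * ∏ i, geomSeries (primDeg i)) * 168
      = cycleSeries 1 + 21 * cycleSeries 2 + 56 * cycleSeries 3 + 42 * cycleSeries 4
        + 48 * cycleSeries 7 := by
  let φ := algebraMap (PowerSeries ℤ) (FractionRing (PowerSeries ℤ))
  have map_mul_eq_one {w : ℕ} (hw : w ≠ 0) : (1 - φ PowerSeries.X ^ w) * φ (geomSeries w) = 1 := by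
    rw [← map_one φ, ← map_pow, ← map_sub, ← map_mul, one_sub_X_pow_mul_geomSeries hw]
  have map_geomSeries {w : ℕ} (hw : w ≠ 0) : φ (geomSeries w) = (1 - φ PowerSeries.X ^ w)⁻¹ :=
    eq_inv_of_mul_eq_one_right (map_mul_eq_one hw)
  have ne_zero {w : ℕ} (hw : w ≠ 0) : 1 - φ PowerSeries.X ^ w ≠ 0 :=
    left_ne_zero_of_mul_eq_one (map_mul_eq_one hw)
  apply IsFractionRing.injective (PowerSeries ℤ) (FractionRing (PowerSeries ℤ))
  change φ _ = φ _
  simp only [map_add, map_mul, map_sum, map_prod, map_pow, map_ofNat, cycleSeries,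
    map_geomSeries (primDeg_ne_zero _), map_geomSeries one_ne_zero,
    map_geomSeries (OfNat.ofNat_ne_zero _), pow_one]
  exact molien_identity_of_field (pow_one (φ PowerSeries.X) ▸ ne_zero one_ne_zero)
    (ne_zero two_ne_zero) (ne_zero three_ne_zero) (ne_zero four_ne_zero) (ne_zero (by decide))
    (ne_zero (by decide))

theorem card_weightedExponent_le {ι : Type*} [Fintype ι] {w : ι → ℕ} (hw : ∀ i, w i ≠ 0)
    (d n : ℕ) :
    (Nat.card {e : ι →₀ ℕ // d + Finsupp.weight w e ≤ n} : ℤ)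
      = PowerSeries.coeff n (PowerSeries.X ^ d * (geomSeries 1 * ∏ i, geomSeries (w i))) := by
  rw [PowerSeries.coeff_X_pow_mul']
  split_ifs with hd
  · let w' : Option ι → ℕ := fun o => o.elim 1 w
    have hw' : ∀ o, w' o ≠ 0 := Option.rec one_ne_zero hw
    have prod_eq : geomSeries 1 * ∏ i, geomSeries (w i) = ∏ o, geomSeries (w' o) :=
      (Fintype.prod_option fun o => geomSeries (w' o)).symm
    have weight_eq (e : Option ι →₀ ℕ) :
        Finsupp.weight w' e = e none + Finsupp.weight w e.some := by
      simp [Finsupp.weight_eq_sum, Fintype.sum_option, w']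
    rw [prod_eq, ← card_weightedExponent hw', Nat.cast_inj]
    refine Nat.card_congr ⟨fun e => ⟨e.1.optionElim (n - d - Finsupp.weight w e.1), ?_⟩,
      fun e => ⟨e.1.some, ?_⟩, fun e => ?_, fun e => ?_⟩
    · have := e.2
      rw [weight_eq, Finsupp.optionElim_apply_none, Finsupp.some_optionElim]
      lia
    · have := (weight_eq e.1).symm.trans e.2
      lia
    · simp
    · have := (weight_eq e.1).symm.trans e.2
      ext (_ | i)
      · rw [Finsupp.optionElim_apply_none]
        lia
      · simp
  · have : IsEmpty {e : ι →₀ ℕ // d + Finsupp.weight w e ≤ n} :=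
      ⟨fun e => hd (le_self_add.trans e.2)⟩
    simp

/-- The pairs of a secondary index `j` and an exponent `e` for which the monomial `f^e gⱼ` in the
invariants `f₁, …, f₆, g₁, …, g₁₈` has degree at most `n`. -/
abbrev HironakaIndex (n : ℕ) : Type :=
  Σ j, {e : Fin 6 →₀ ℕ // secDeg j + Finsupp.weight primDeg e ≤ n}

instance (d n : ℕ) : Finite {e : Fin 6 →₀ ℕ // d + Finsupp.weight primDeg e ≤ n} :=
  Set.Finite.to_subtype <| (Finsupp.finite_of_nat_weight_le primDeg primDeg_ne_zero n).subset
    fun e (he : d + Finsupp.weight primDeg e ≤ n) => le_trans (Nat.le_add_left _ _) he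

theorem card_hironakaIndex (n : ℕ) : Nat.card (HironakaIndex n)
    = Nat.card (MulAction.orbitRel.Quotient G3 (WeightedExponent (1 : Point → ℕ) n)) := by
  have card_mul : (Nat.card (HironakaIndex n) * 168 : ℤ) = PowerSeries.coeff n
      ((∑ j, PowerSeries.X ^ secDeg j) * (geomSeries 1 * ∏ i, geomSeries (primDeg i)) * 168) := by
    rw [← map_ofNat (PowerSeries.C (R := ℤ)), PowerSeries.coeff_mul_C, Finset.sum_mul, map_sum,
      Nat.card_sigma, Nat.cast_sum]
    simp only [card_weightedExponent_le primDeg_ne_zero]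
  have orbits_mul := card_orbits_weightedExponent_mul_card (G := G3) (α := Point) n
  simp only [prod_geomSeries_eq_cycleSeries, ← map_sum, sum_apply_orderOf, card_G3] at orbits_mul
  rw [molien_identity, ← orbits_mul] at card_mul
  exact_mod_cast Nat.eq_of_mul_eq_mul_right (by decide : 0 < 168) (by exact_mod_cast card_mul)

end Molien

section Generators

open Matrix

theorem exists_mem_closure_coe_eq_transvection {i j : Fin 3} (hij : i ≠ j) :
    ∃ g ∈ Subgroup.closure {Agen, Bgen}, g.1 = transvection i j 1 := by
  let IsMem (i j : Fin 3) : Prop :=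
    ∃ g ∈ Subgroup.closure {Agen, Bgen}, g.1 = transvection i j 1
  have hA : Agen ∈ Subgroup.closure {Agen, Bgen} := Subgroup.subset_closure (.inl rfl)
  have hB : Bgen ∈ Subgroup.closure {Agen, Bgen} := Subgroup.subset_closure (.inr rfl)
  have conj_eq : ∀ i j,
      Bgen.1 * transvection i j 1 * Bgen⁻¹.1 = transvection (i + 1) (j + 1) 1 := by
    decide +kernel
  have conj {i j} : IsMem i j → IsMem (i + 1) (j + 1) := fun ⟨g, hg, hgij⟩ =>
    ⟨Bgen * g * Bgen⁻¹, mul_mem (mul_mem hB hg) (inv_mem hB), by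
      simpa only [Units.val_mul, hgij] using conj_eq i j⟩
  have comm_eq : transvection 0 2 1 * transvection 2 1 1 * transvection 0 2 1 * transvection 2 1 1
      = (transvection 0 1 1 : Matrix (Fin 3) (Fin 3) F2) := by decide +kernel
  have h₀₂ : IsMem 0 2 := ⟨Agen, hA, by decide +kernel⟩
  have h₁₀ : IsMem 1 0 := conj h₀₂
  have h₂₁ : IsMem 2 1 := conj h₁₀
  have h₀₁ : IsMem 0 1 := by
    obtain ⟨⟨g, hg, hg'⟩, ⟨h, hh, hh'⟩⟩ := And.intro h₀₂ h₂₁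
    exact ⟨g * h * g * h, mul_mem (mul_mem (mul_mem hg hh) hg) hh, by simp [hg', hh', comm_eq]⟩
  have h₁₂ : IsMem 1 2 := conj h₀₁
  have h₂₀ : IsMem 2 0 := conj h₁₂
  fin_cases i <;> fin_cases j <;> first | assumption | exact absurd rfl hij

theorem closure_Agen_Bgen : Subgroup.closure {Agen, Bgen} = ⊤ := by
  have eq_one : ∀ c : F2, c ≠ 0 → c = 1 := by decide
  suffices ∀ M : Matrix (Fin 3) (Fin 3) F2, M.det ≠ 0 →
      ∃ g ∈ Subgroup.closure {Agen, Bgen}, g.1 = M by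
    refine (Subgroup.eq_top_iff' _).2 fun σ => ?_
    obtain ⟨g, hg, hgσ⟩ := this σ σ.det.ne_zero
    rwa [← Units.ext hgσ]
  intro M hM
  refine diagonal_transvection_induction_of_det_ne_zero
    (fun M => ∃ g ∈ Subgroup.closure {Agen, Bgen}, g.1 = M) M hM (fun d hd => ?_) (fun t => ?_) ?_
  · have hd : d = 1 := funext fun i => by
      rw [det_diagonal, Finset.prod_ne_zero_iff] at hd
      exact eq_one _ (hd i (Finset.mem_univ i))
    exact ⟨1, one_mem _, by rw [hd]; exact diagonal_one.symm⟩
  · by_cases hc : t.c = 0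
    · exact ⟨1, one_mem _, by simp [TransvectionStruct.toMatrix, hc]⟩
    · rw [TransvectionStruct.toMatrix, eq_one _ hc]
      exact exists_mem_closure_coe_eq_transvection t.hij
  · rintro _ _ - - ⟨g, hg, rfl⟩ ⟨h, hh, rfl⟩
    exact ⟨g * h, mul_mem hg hh, rfl⟩

end Generators

section Forms

open Matrix

theorem sum_range_homogeneousComponent {σ R : Type*} [CommSemiring R] {p : MvPolynomial σ R}
    {n : ℕ} (hp : p.totalDegree ≤ n) :
    ∑ m ∈ Finset.range (n + 1), homogeneousComponent m p = p := by
  conv_rhs => rw [← sum_homogeneousComponent p]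
  refine (Finset.sum_subset (Finset.range_mono (Nat.succ_le_succ hp)) fun m _ hm => ?_).symm
  exact homogeneousComponent_eq_zero m p (by simpa using hm)

theorem totalDegree_aeval_le {σ τ R : Type*} [CommSemiring R] {f : σ → MvPolynomial τ R}
    (hf : ∀ i, (f i).totalDegree ≤ 1) (p : MvPolynomial σ R) :
    (aeval f p).totalDegree ≤ p.totalDegree := by
  conv_lhs => rw [p.as_sum, map_sum]
  refine totalDegree_finsetSum_le fun e he => ?_
  rw [aeval_monomial, algebraMap_eq]
  refine (totalDegree_mul _ _).trans ?_
  rw [totalDegree_C, zero_add]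
  refine (totalDegree_finsetProd _ _).trans (le_trans ?_ (le_totalDegree he))
  exact Finset.sum_le_sum fun i _ =>
    (totalDegree_pow _ _).trans ((Nat.mul_le_mul_left _ (hf i)).trans_eq (mul_one _))

/-- The coordinates of a row vector `v` of `𝔽₂³` followed by the products of pairs of them: an
equivariant embedding of the Fano plane in `W'^*`. -/
def quadCoords (v : Fin 3 → F2) : Fin 6 → F2 :=
  ![v 0, v 1, v 2, v 0 * v 1, v 1 * v 2, v 0 * v 2]

/-- A basis-dual companion of `quadCoords`: it vanishes against `quadCoords v` only at `u = v`. -/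
def dualCoords (u : Fin 3 → F2) : Fin 6 → F2 :=
  ![u 1 + u 2 + u 1 * u 2, u 0 + u 2 + u 0 * u 2, u 0 + u 1 + u 0 * u 1, u 2, u 0, u 1]

theorem quadCoords_dotProduct_dualCoords : ∀ u v : Point,
    quadCoords v.1 ⬝ᵥ dualCoords u.1 = if u = v then 0 else 1 := by
  decide +kernel

theorem sum_dualCoords_mul_quadCoords : ∀ i j,
    ∑ u : Point, dualCoords u.1 i * quadCoords u.1 j = if i = j then 1 else 0 := by
  decide +kernel

variable {D : G3 →* GL (Fin 6) F2}

theorem quadCoords_vecMul (hA : (D Agen).1 = DA6) (hB : (D Bgen).1 = DB6) (σ : G3) :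
    ∀ v, quadCoords v ᵥ* (D σ).1 = quadCoords (v ᵥ* σ.1) := by
  have hσ : σ ∈ Subgroup.closure {Agen, Bgen} := closure_Agen_Bgen ▸ Subgroup.mem_top σ
  induction hσ using Subgroup.closure_induction with
  | mem g hg =>
    rcases hg with rfl | rfl
    · rw [hA]; decide +kernel
    · rw [hB]; decide +kernel
  | one => simp
  | mul g h _ _ ihg ihh =>
    intro v
    rw [map_mul, Units.val_mul, Units.val_mul, ← vecMul_vecMul, ← vecMul_vecMul, ihg, ihh]
  | inv g _ ih =>
    intro v
    have h := ih (v ᵥ* (g⁻¹).1)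
    rw [vecMul_vecMul, ← Units.val_mul, inv_mul_cancel, Units.val_one, vecMul_one] at h
    rw [← h, vecMul_vecMul, ← Units.val_mul, map_inv, mul_inv_cancel, Units.val_one, vecMul_one]

theorem polyAct_sum_smul_X (σ : G3) (q : Fin 6 → F2) :
    polyAct D σ (∑ i, q i • X i) = ∑ j, (q ᵥ* (D σ).1) j • X j := by
  simp only [map_sum, map_smul, polyAct, aeval_X, Finset.smul_sum, smul_smul, vecMul, dotProduct,
    Finset.sum_smul]
  exact Finset.sum_comm

/-- The linear form on `W'` attached to a point of the Fano plane; `G` permutes these seven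
forms. -/
noncomputable def pointForm (v : Point) : MvPolynomial (Fin 6) F2 := ∑ i, quadCoords v.1 i • X i

theorem polyAct_pointForm (hA : (D Agen).1 = DA6) (hB : (D Bgen).1 = DB6) (σ : G3) (v : Point) :
    polyAct D σ (pointForm v) = pointForm (σ⁻¹ • v) := by
  rw [pointForm, polyAct_sum_smul_X, quadCoords_vecMul hA hB, ← coe_inv_smul, pointForm]

theorem sum_dualCoords_smul_pointForm (i : Fin 6) : ∑ u, dualCoords u.1 i • pointForm u = X i := by
  simp only [pointForm, Finset.smul_sum, smul_smul]
  rw [Finset.sum_comm]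
  simp only [← Finset.sum_smul, sum_dualCoords_mul_quadCoords, ite_smul, one_smul, zero_smul,
    Finset.sum_ite_eq, Finset.mem_univ, if_true]

theorem algHom_ext_pointForm {S : Type*} [Semiring S] [Algebra F2 S]
    {φ ψ : MvPolynomial (Fin 6) F2 →ₐ[F2] S} (h : ∀ v, φ (pointForm v) = ψ (pointForm v)) :
    φ = ψ := by
  ext i
  simp only [← sum_dualCoords_smul_pointForm i, map_sum, map_smul, h]

/-- A section `S[W'^*] → 𝔽₂[x_v]` of `ofPointPoly`; it commutes with `G`. -/
noncomputable def toPointPoly : MvPolynomial (Fin 6) F2 →ₐ[F2] MvPolynomial Point F2 :=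
  aeval fun i => ∑ u, dualCoords u.1 i • X u

/-- The substitution `x_v ↦ pointForm v + 1`, which commutes with `G` and sends the invariant
linear form `∑ v, x_v` to `1`. -/
noncomputable def ofPointPoly : MvPolynomial Point F2 →ₐ[F2] MvPolynomial (Fin 6) F2 :=
  aeval fun v => pointForm v + 1

theorem toPointPoly_pointForm (v : Point) : toPointPoly (pointForm v) = X v + ∑ u, X u := by
  have smul_eq (u : Point) : (quadCoords v.1 ⬝ᵥ dualCoords u.1) • (X u : MvPolynomial Point F2)
      = (if v = u then X u else 0) + X u := by
    rw [quadCoords_dotProduct_dualCoords]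
    by_cases h : u = v
    · simp [h, CharTwo.add_self_eq_zero]
    · simp [h, Ne.symm h]
  have sum_eq : toPointPoly (pointForm v) = ∑ u, (quadCoords v.1 ⬝ᵥ dualCoords u.1) • X u := by
    simp only [pointForm, toPointPoly, map_sum, map_smul, aeval_X, Finset.smul_sum, smul_smul,
      dotProduct, Finset.sum_smul]
    exact Finset.sum_comm
  simp only [sum_eq, smul_eq, Finset.sum_add_distrib, Finset.sum_ite_eq, Finset.mem_univ, if_true]

theorem ofPointPoly_sum_X : ofPointPoly (∑ v, X v) = 1 := by
  have sum_quadCoords : ∀ i, ∑ v : Point, quadCoords v.1 i = 0 := by decide +kernel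
  have sum_pointForm : ∑ v, pointForm v = 0 := by
    simp only [pointForm]
    rw [Finset.sum_comm]
    simp only [← Finset.sum_smul, sum_quadCoords, zero_smul, Finset.sum_const_zero]
  have card_point : (Fintype.card Point : F2) = 1 := by decide +kernel
  simp only [ofPointPoly, map_sum, aeval_X, Finset.sum_add_distrib, sum_pointForm]
  rw [Finset.sum_const, Finset.card_univ, zero_add, ← Nat.cast_smul_eq_nsmul F2, card_point,
    one_smul]

theorem ofPointPoly_toPointPoly (p : MvPolynomial (Fin 6) F2) :
    ofPointPoly (toPointPoly p) = p := by
  refine DFunLike.congr_fun (f := ofPointPoly.comp toPointPoly) (g := AlgHom.id F2 _)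
    (algHom_ext_pointForm fun v => ?_) p
  rw [AlgHom.comp_apply, toPointPoly_pointForm, map_add, ofPointPoly_sum_X, ofPointPoly, aeval_X,
    add_assoc, CharTwo.add_self_eq_zero, add_zero, AlgHom.id_apply]

theorem sum_X_smul (σ : G3) : ∑ u : Point, (X (σ • u) : MvPolynomial Point F2) = ∑ u, X u :=
  Equiv.sum_comp (MulAction.toPerm σ) X

theorem toPointPoly_polyAct (hA : (D Agen).1 = DA6) (hB : (D Bgen).1 = DB6) (σ : G3)
    (p : MvPolynomial (Fin 6) F2) :
    toPointPoly (polyAct D σ p) = rename (σ⁻¹ • ·) (toPointPoly p) := by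
  refine DFunLike.congr_fun (f := toPointPoly.comp (polyAct D σ))
    (g := (rename (σ⁻¹ • ·)).comp toPointPoly) (algHom_ext_pointForm fun v => ?_) p
  simp only [AlgHom.comp_apply, polyAct_pointForm hA hB, toPointPoly_pointForm, map_add, map_sum,
    rename_X, sum_X_smul]

/-- The space of invariants of degree at most `n`. -/
noncomputable def invGLE (D : G3 →* GL (Fin 6) F2) (n : ℕ) :
    Submodule F2 (MvPolynomial (Fin 6) F2) :=
  (invG D).toSubmodule ⊓ restrictTotalDegree (Fin 6) F2 n

theorem exists_permInvariants_ofPointPoly_eq (hA : (D Agen).1 = DA6) (hB : (D Bgen).1 = DB6)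
    {n : ℕ} {p : MvPolynomial (Fin 6) F2} (hp : p ∈ invGLE D n) :
    ∃ P ∈ permInvariants G3 Point F2 n, ofPointPoly P = p := by
  have rename_eq (σ : G3) : rename (σ • ·) (toPointPoly p) = toPointPoly p := by
    have h := toPointPoly_polyAct hA hB σ⁻¹ p
    rwa [hp.1 σ⁻¹ (Subgroup.mem_top _), inv_inv, eq_comm] at h
  have totalDegree_le : (toPointPoly p).totalDegree ≤ n := by
    refine (totalDegree_aeval_le (fun i => ?_) p).trans ((mem_restrictTotalDegree _ _ _).1 hp.2)
    exact totalDegree_finsetSum_le fun u _ =>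
      (totalDegree_smul_le _ _).trans (totalDegree_X _).le
  refine ⟨∑ m ∈ Finset.range (n + 1),
    (∑ v, X v) ^ (n - m) * homogeneousComponent m (toPointPoly p),
    ⟨IsHomogeneous.sum _ _ _ fun m hm => ?_, fun σ => ?_⟩, ?_⟩
  · have h := ((IsHomogeneous.sum Finset.univ _ 1 fun v _ => isHomogeneous_X F2 v).pow
      (n - m)).mul (homogeneousComponent_isHomogeneous m (toPointPoly p))
    rwa [one_mul, Nat.sub_add_cancel (Finset.mem_range_succ_iff.1 hm)] at h
  · simp only [map_sum, map_mul, map_pow, rename_X, rename_homogeneousComponent, rename_eq,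
      sum_X_smul]
  · rw [map_sum]
    simp only [map_mul, map_pow, ofPointPoly_sum_X, one_pow, one_mul]
    rw [← map_sum, sum_range_homogeneousComponent totalDegree_le, ofPointPoly_toPointPoly]

theorem finrank_invGLE_le (hA : (D Agen).1 = DA6) (hB : (D Bgen).1 = DB6) (n : ℕ) :
    Module.finrank F2 (invGLE D n)
      ≤ Nat.card (MulAction.orbitRel.Quotient G3 (WeightedExponent (1 : Point → ℕ) n)) := by
  have le_map : invGLE D n ≤ (permInvariants G3 Point F2 n).map ofPointPoly.toLinearMap :=
    fun p hp => exists_permInvariants_ofPointPoly_eq hA hB hp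
  exact (Submodule.finrank_mono le_map).trans
    ((Submodule.finrank_map_le _ _).trans (finrank_permInvariants_le F2 n))

end Forms

section BitRing

/-- The ring `𝔽₂[t]/(t¹⁸ + t³ + 1)` in a form the kernel computes with: the `i`-th binary digit of
`bits` is the coefficient of `tⁱ`. -/
@[ext] structure BitRing where
  bits : BitVec 18

namespace BitRing

instance : DecidableEq BitRing :=
  fun _ _ => decidable_of_iff _ BitRing.ext_iff.symm

/-- Multiplication by `t` on coefficient vectors. -/
def mulT (b : BitVec 18) : BitVec 18 := (b <<< 1) ^^^ if b.getLsbD 17 then 9 else 0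

/-- The product of `b` with the polynomial formed by the `k` lowest coefficients of `a`. -/
def mulLow : ℕ → BitVec 18 → BitVec 18 → BitVec 18
  | 0, _, _ => 0
  | k + 1, a, b => (if a.getLsbD 0 then b else 0) ^^^ mulLow k (a >>> 1) (mulT b)

instance : Zero BitRing := ⟨⟨0⟩⟩
instance : One BitRing := ⟨⟨1⟩⟩
instance : Add BitRing := ⟨fun a b => ⟨a.bits ^^^ b.bits⟩⟩
instance : Neg BitRing := ⟨id⟩
instance : Mul BitRing := ⟨fun a b => ⟨mulLow 18 a.bits b.bits⟩⟩

/-- The modulus `t¹⁸ + t³ + 1`. -/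
noncomputable def modulus : Polynomial F2 := Polynomial.X ^ 18 + Polynomial.X ^ 3 + 1

theorem natDegree_modulus : modulus.natDegree = 18 := by
  unfold modulus
  compute_degree!

theorem monic_modulus : modulus.Monic := by
  unfold modulus
  monicity!

/-- The class of `t` modulo `t¹⁸ + t³ + 1`. -/
noncomputable def root : AdjoinRoot modulus := AdjoinRoot.root modulus

theorem root_pow_eighteen : root ^ 18 = root ^ 3 + 1 := by
  have vanishing : AdjoinRoot.mk modulus (Polynomial.X ^ 18 + Polynomial.X ^ 3 + 1) = 0 :=
    AdjoinRoot.mk_self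
  simp only [map_add, map_pow, map_one, AdjoinRoot.mk_X] at vanishing
  rw [← sub_eq_zero, ZModModule.sub_eq_add, ← add_assoc, root, vanishing]

/-- The class of the polynomial formed by the `k` lowest coefficients. -/
noncomputable def evalLow (k : ℕ) (a : BitVec 18) : AdjoinRoot modulus :=
  ∑ i ∈ Finset.range k, if a.getLsbD i then root ^ i else 0

theorem evalLow_zero (k : ℕ) : evalLow k 0 = 0 := by
  simp [evalLow]

theorem evalLow_one : evalLow 18 1 = 1 := by
  simp [evalLow, BitVec.getLsbD_one]

theorem evalLow_xor (k : ℕ) (a b : BitVec 18) :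
    evalLow k (a ^^^ b) = evalLow k a + evalLow k b := by
  simp only [evalLow, ← Finset.sum_add_distrib, BitVec.getLsbD_xor]
  refine Finset.sum_congr rfl fun i _ => ?_
  cases a.getLsbD i <;> cases b.getLsbD i <;> simp [ZModModule.add_self]

theorem evalLow_succ (k : ℕ) (a : BitVec 18) :
    evalLow (k + 1) a
      = (if a.getLsbD 0 then 1 else 0 : AdjoinRoot modulus) + root * evalLow k (a >>> 1) := by
  simp only [evalLow, Finset.sum_range_succ', add_comm, Finset.mul_sum, mul_ite, mul_zero,
    pow_succ', pow_zero, BitVec.getLsbD_ushiftRight]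

theorem evalLow_shiftLeft_one (k : ℕ) (b : BitVec 18) (hk : k < 18) :
    evalLow (k + 1) (b <<< 1) = root * evalLow k b := by
  have digit_zero : (b <<< 1).getLsbD 0 = false := by simp
  have digit_succ (i : ℕ) (hi : i < k) : ((b <<< 1) >>> 1).getLsbD i = b.getLsbD i := by
    rw [BitVec.getLsbD_ushiftRight, BitVec.getLsbD_shiftLeft]
    simp [show 1 + i < 18 by lia, -BitVec.getLsbD_eq_getElem]
  rw [evalLow_succ, digit_zero, if_neg Bool.false_ne_true, zero_add]
  refine congrArg (root * ·) (Finset.sum_congr rfl fun i hi => ?_)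
  rw [digit_succ i (Finset.mem_range.mp hi)]

theorem evalLow_mulT (b : BitVec 18) : evalLow 18 (mulT b) = root * evalLow 18 b := by
  have overflow : evalLow 18 9 = root ^ 18 := by
    rw [root_pow_eighteen]
    simp [evalLow, Finset.sum_range_succ, add_comm]
  have split_top : evalLow 18 b = evalLow 17 b + if b.getLsbD 17 then root ^ 17 else 0 :=
    Finset.sum_range_succ _ 17
  rw [mulT, evalLow_xor, evalLow_shiftLeft_one 17 b (by norm_num), split_top, mul_add]
  split_ifs
  · rw [overflow, pow_succ']
  · rw [evalLow_zero, mul_zero]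

theorem evalLow_mulLow (k : ℕ) (a b : BitVec 18) :
    evalLow 18 (mulLow k a b) = evalLow k a * evalLow 18 b := by
  induction k generalizing a b with
  | zero => simp [mulLow, evalLow]
  | succ k ih =>
    rw [mulLow, evalLow_xor, ih, evalLow_mulT, evalLow_succ k a]
    split_ifs
    · ring
    · rw [evalLow_zero]
      ring

theorem linearIndependent_root_pow : LinearIndependent F2 fun i : Fin 18 => root ^ (i : ℕ) := by
  have minpoly_root : minpoly F2 root = modulus := by
    rw [root, AdjoinRoot.minpoly_root monic_modulus.ne_zero, monic_modulus, inv_one, map_one,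
      mul_one]
  have independent := linearIndependent_pow (K := F2) root
  rwa [minpoly_root, natDegree_modulus] at independent

theorem evalLow_injective : Function.Injective (evalLow 18) := by
  intro a b hab
  have expand (a : BitVec 18) : evalLow 18 a
      = ∑ i : Fin 18, (if a.getLsbD i then (1 : F2) else 0) • root ^ (i : ℕ) := by
    simp only [evalLow, Finset.sum_range, ite_smul, one_smul, zero_smul]
  rw [expand, expand] at hab
  have digits := linearIndependent_root_pow.eq_coords_of_eq hab
  ext i hi
  have digit := digits ⟨i, hi⟩
  rw [← BitVec.getLsbD_eq_getElem, ← BitVec.getLsbD_eq_getElem]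
  cases ha : a.getLsbD i <;> cases hb : b.getLsbD i <;> simp_all

/-- The value of an element of `BitRing` in `𝔽₂[t]/(t¹⁸ + t³ + 1)`. -/
noncomputable def eval (a : BitRing) : AdjoinRoot modulus :=
  evalLow 18 a.bits

theorem eval_injective : Function.Injective eval :=
  fun _ _ h => BitRing.ext (evalLow_injective h)

theorem eval_zero : eval 0 = 0 :=
  evalLow_zero 18

theorem eval_one : eval 1 = 1 :=
  evalLow_one

theorem eval_add (a b : BitRing) : eval (a + b) = eval a + eval b :=
  evalLow_xor 18 a.bits b.bits

theorem eval_mul (a b : BitRing) : eval (a * b) = eval a * eval b :=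
  evalLow_mulLow 18 a.bits b.bits

instance : CommRing BitRing :=
  CommRing.ofMinimalAxioms
    (fun a b c => eval_injective (by simp only [eval_add, add_assoc]))
    (fun a => eval_injective (by rw [eval_add, eval_zero, zero_add]))
    (fun a => eval_injective (by
      rw [eval_add, eval_zero]
      exact ZModModule.add_self (eval a)))
    (fun a b c => eval_injective (by simp only [eval_mul, mul_assoc]))
    (fun a b => eval_injective (by rw [eval_mul, eval_mul, mul_comm]))
    (fun a => eval_injective (by rw [eval_mul, eval_one, one_mul]))
    (fun a b c => eval_injective (by simp only [eval_add, eval_mul, mul_add]))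

instance : CharP BitRing 2 :=
  CharTwo.of_one_ne_zero_of_two_eq_zero (by decide) (by rw [← one_add_one_eq_two]; decide)

instance : Algebra F2 BitRing :=
  ZMod.algebra BitRing 2

/-- The matrix over `𝔽₂` whose rows are the given coefficient vectors. -/
def digitMatrix (v : Fin 18 → BitVec 18) : Matrix (Fin 18) (Fin 18) F2 :=
  Matrix.of fun i j => if (v i).getLsbD j then 1 else 0

theorem linearIndependent_of_digitMatrix_mul_eq_one {v : Fin 18 → BitRing}
    {N : Matrix (Fin 18) (Fin 18) F2} (h : N * digitMatrix (fun i => (v i).bits) = 1) :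
    LinearIndependent F2 v := by
  let digits : BitRing →+ (Fin 18 → F2) :=
    { toFun := fun a j => if a.bits.getLsbD j then 1 else 0
      map_zero' := by decide
      map_add' := fun a b => funext fun j => by
        change (if (a.bits ^^^ b.bits).getLsbD j then (1 : F2) else 0) = _
        rw [BitVec.getLsbD_xor, Pi.add_apply]
        cases a.bits.getLsbD j <;> cases b.bits.getLsbD j <;> rfl }
  refine LinearIndependent.of_comp (digits.toZModLinearMap 2) ?_
  exact Matrix.linearIndependent_rows_of_isUnit (.of_mul_eq_one_right N h)

end BitRing

end BitRing

section FanoInvariants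

open Matrix

/-- The lines of the Fano plane, as sets of three points. -/
def fanoLines : Finset (Finset Point) :=
  {s ∈ Finset.univ.powersetCard 3 | ∑ v ∈ s, v.1 = 0}

theorem map_mem_fanoLines_iff (σ : G3) (s : Finset Point) :
    s.map (MulAction.toPerm σ).toEmbedding ∈ fanoLines ↔ s ∈ fanoLines := by
  have sum_smul : ∑ v ∈ s, (σ • v).1 = (∑ v ∈ s, v.1) ᵥ* (σ⁻¹).1 := by
    rw [sum_vecMul]
    rfl
  have sum_eq_zero_iff : ∑ v ∈ s, (σ • v).1 = 0 ↔ ∑ v ∈ s, v.1 = 0 := by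
    rw [sum_smul]
    exact ⟨not_imp_not.mp fun h => vecMul_ne_zero h σ⁻¹, fun h => by rw [h, zero_vecMul]⟩
  simp [fanoLines, sum_eq_zero_iff]

section Semiring

variable {R : Type*} [CommSemiring R]

/-- The `k`-th elementary symmetric polynomial in the values of `x` on `s`. -/
def esymmOn (s : Finset Point) (k : ℕ) (x : Point → R) : R :=
  ∑ t ∈ s.powersetCard k, ∏ v ∈ t, x v

/-- The sum over all lines of the product of the values of `x` on the line. -/
def lineSum (x : Point → R) : R :=
  ∑ s ∈ fanoLines, ∏ v ∈ s, x v

/-- The sum over all lines of the product of the `a`-th and the `b`-th elementary symmetric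
polynomials in the values of `x` off the line. -/
def complSum (a b : ℕ) (x : Point → R) : R :=
  ∑ s ∈ fanoLines, esymmOn sᶜ a x * esymmOn sᶜ b x

/-- The primary invariants, as functions of the values at the points of the Fano plane. -/
def primaryInvariant (x : Point → R) : Fin 6 → R :=
  let e := fun k => esymmOn Finset.univ k x
  ![e 2, e 3, lineSum x, e 4, complSum 2 4 x, e 7]

/-- The secondary invariants, as functions of the values at the points of the Fano plane. -/
def secondaryInvariant (x : Point → R) : Fin 18 → R :=
  let b := complSum 0 4 x
  let z := complSum 2 3 x
  let e := esymmOn Finset.univ 5 x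
  let f := esymmOn Finset.univ 6 x
  let h := complSum 3 4 x
  ![1, b, z, e, f, h, b ^ 2, b * z, b * e, z ^ 2, e * z, z * f, f ^ 2, f * h, h ^ 2, b * z ^ 2,
    z ^ 3, f ^ 2 * h]

theorem esymmOn_comp_smul (σ : G3) (s : Finset Point) (k : ℕ) (x : Point → R) :
    esymmOn s k (fun v => x (σ • v))
      = esymmOn (s.map (MulAction.toPerm σ).toEmbedding) k x := by
  simp [esymmOn, Finset.powersetCard_map]

theorem sum_fanoLines_map (σ : G3) (f : Finset Point → R) :
    ∑ s ∈ fanoLines, f (s.map (MulAction.toPerm σ).toEmbedding) = ∑ s ∈ fanoLines, f s :=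
  Finset.sum_equiv (MulAction.toPerm σ).finsetCongr
    (fun s => (map_mem_fanoLines_iff σ s).symm) fun _ _ => rfl

theorem lineSum_comp_smul (σ : G3) (x : Point → R) :
    lineSum (fun v => x (σ • v)) = lineSum x := by
  simpa [lineSum] using sum_fanoLines_map σ fun s => ∏ v ∈ s, x v

theorem complSum_comp_smul (σ : G3) (a b : ℕ) (x : Point → R) :
    complSum a b (fun v => x (σ • v)) = complSum a b x := by
  have map_compl (s : Finset Point) : sᶜ.map (MulAction.toPerm σ).toEmbedding
      = (s.map (MulAction.toPerm σ).toEmbedding)ᶜ := by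
    rw [← Finset.coe_inj]
    simpa using Set.image_compl_eq (MulAction.bijective σ)
  simp only [complSum, esymmOn_comp_smul, map_compl]
  exact sum_fanoLines_map σ fun s => esymmOn sᶜ a x * esymmOn sᶜ b x

theorem primaryInvariant_comp_smul (σ : G3) (x : Point → R) :
    primaryInvariant (fun v => x (σ • v)) = primaryInvariant x := by
  simp [primaryInvariant, esymmOn_comp_smul, lineSum_comp_smul, complSum_comp_smul]

theorem secondaryInvariant_comp_smul (σ : G3) (x : Point → R) :
    secondaryInvariant (fun v => x (σ • v)) = secondaryInvariant x := by
  simp [secondaryInvariant, esymmOn_comp_smul, complSum_comp_smul]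

variable {S F : Type*} [CommSemiring S] [FunLike F R S] [RingHomClass F R S] (φ : F)

theorem map_esymmOn (s : Finset Point) (k : ℕ) (x : Point → R) :
    φ (esymmOn s k x) = esymmOn s k (fun v => φ (x v)) := by
  simp [esymmOn]

theorem map_lineSum (x : Point → R) : φ (lineSum x) = lineSum fun v => φ (x v) := by
  simp [lineSum]

theorem map_complSum (a b : ℕ) (x : Point → R) :
    φ (complSum a b x) = complSum a b fun v => φ (x v) := by
  simp [complSum, map_esymmOn]

theorem map_primaryInvariant (x : Point → R) (i : Fin 6) :
    φ (primaryInvariant x i) = primaryInvariant (fun v => φ (x v)) i := by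
  fin_cases i <;> simp [primaryInvariant, map_esymmOn, map_lineSum, map_complSum]

theorem map_secondaryInvariant (x : Point → R) (j : Fin 18) :
    φ (secondaryInvariant x j) = secondaryInvariant (fun v => φ (x v)) j := by
  fin_cases j <;> simp [secondaryInvariant, map_esymmOn, map_complSum]

end Semiring

section Homogeneity

variable {σ R : Type*} [CommSemiring R] {x : Point → MvPolynomial σ R}

theorem isHomogeneous_esymmOn (hx : ∀ v, (x v).IsHomogeneous 1) (s : Finset Point) (k : ℕ) :
    (esymmOn s k x).IsHomogeneous k := by
  refine IsHomogeneous.sum _ _ _ fun t ht => ?_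
  rw [← (Finset.mem_powersetCard.mp ht).2, Finset.card_eq_sum_ones]
  exact IsHomogeneous.prod _ _ _ fun v _ => hx v

theorem isHomogeneous_lineSum (hx : ∀ v, (x v).IsHomogeneous 1) :
    (lineSum x).IsHomogeneous 3 := by
  refine IsHomogeneous.sum _ _ _ fun s hs => ?_
  rw [← (Finset.mem_powersetCard.mp (Finset.mem_filter.mp hs).1).2, Finset.card_eq_sum_ones]
  exact IsHomogeneous.prod _ _ _ fun v _ => hx v

theorem isHomogeneous_complSum (hx : ∀ v, (x v).IsHomogeneous 1) (a b : ℕ) :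
    (complSum a b x).IsHomogeneous (a + b) :=
  IsHomogeneous.sum _ _ _ fun s _ =>
    (isHomogeneous_esymmOn hx sᶜ a).mul (isHomogeneous_esymmOn hx sᶜ b)

theorem isHomogeneous_primaryInvariant (hx : ∀ v, (x v).IsHomogeneous 1) (i : Fin 6) :
    (primaryInvariant x i).IsHomogeneous (primDeg i) := by
  have e := isHomogeneous_esymmOn hx Finset.univ
  fin_cases i
  exacts [e 2, e 3, isHomogeneous_lineSum hx, e 4, isHomogeneous_complSum hx 2 4, e 7]

theorem isHomogeneous_secondaryInvariant (hx : ∀ v, (x v).IsHomogeneous 1) (j : Fin 18) :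
    (secondaryInvariant x j).IsHomogeneous (secDeg j) := by
  have b := isHomogeneous_complSum hx 0 4
  have z := isHomogeneous_complSum hx 2 3
  have e := isHomogeneous_esymmOn hx Finset.univ 5
  have f := isHomogeneous_esymmOn hx Finset.univ 6
  have h := isHomogeneous_complSum hx 3 4
  fin_cases j
  exacts [isHomogeneous_one _ _, b, z, e, f, h, b.pow 2, b.mul z, b.mul e, z.pow 2, e.mul z,
    z.mul f, f.pow 2, f.mul h, h.pow 2, b.mul (z.pow 2), z.pow 3, (f.pow 2).mul h]

end Homogeneity

end FanoInvariants

section Jacobian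

open DualNumber

variable {σ k K : Type*} [Fintype σ] [CommRing k] [CommRing K] [Algebra k K]

theorem snd_aeval_dualNumber (ξ v : σ → K) (p : MvPolynomial σ k) :
    (aeval (fun i => algebraMap K K[ε] (ξ i) + ε * algebraMap K K[ε] (v i)) p).snd
      = ∑ j, aeval ξ (pderiv j p) * v j := by
  obtain ⟨r, hr⟩ := exists_aeval_add_mul_eq (fun i => algebraMap K K[ε] (ξ i))
    (fun i => algebraMap K K[ε] (v i)) ε p
  have aeval_ξ (q : MvPolynomial σ k) :
      aeval (fun i => algebraMap K K[ε] (ξ i)) q = algebraMap K K[ε] (aeval ξ q) :=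
    aeval_algebraMap_apply K[ε] ξ q
  have snd_algebraMap (a : K) : (algebraMap K K[ε] a).snd = 0 := TrivSqZeroExt.snd_inl K a
  have snd_eps_mul (a : K) : (ε * algebraMap K K[ε] a).snd = a := by
    simp [TrivSqZeroExt.algebraMap_eq_inl]
  rw [hr, pow_two, eps_mul_eps, zero_mul, add_zero]
  simp only [aeval_ξ, ← map_mul, ← map_sum]
  rw [TrivSqZeroExt.snd_add, snd_algebraMap, snd_eps_mul, zero_add]

theorem of_pderiv_mul_eq_one [DecidableEq σ] {F : σ → MvPolynomial σ k} {ξ : σ → K}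
    {N : Matrix σ σ K} (h : ∀ i m, (aeval (fun j =>
      algebraMap K K[ε] (ξ j) + ε * algebraMap K K[ε] (N j m)) (F i)).snd
        = (1 : Matrix σ σ K) i m) :
    (Matrix.of fun i j => aeval ξ (pderiv j (F i))) * N = 1 := by
  ext i m
  rw [← h, snd_aeval_dualNumber ξ (N · m)]
  rfl

end Jacobian

section Specialization

open DualNumber

/-- A point of `W'` over `BitRing`, found by computer search, at which the primary invariants take
values in `𝔽₂`, their Jacobian matrix is invertible and the secondary invariants are linearly
independent over `𝔽₂`. -/
def basePoint : Fin 6 → BitRing :=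
  ![⟨0⟩, ⟨94445⟩, ⟨109289⟩, ⟨148261⟩, ⟨254860⟩, ⟨181004⟩]

/-- The values of the primary invariants at `basePoint`. -/
def primaryValue : Fin 6 → F2 :=
  ![0, 1, 0, 0, 1, 0]

/-- The inverse of the Jacobian matrix of the primary invariants at `basePoint`. -/
def jacobianInv : Matrix (Fin 6) (Fin 6) BitRing :=
  !![⟨0⟩, ⟨0⟩, ⟨0⟩, ⟨0⟩, ⟨0⟩, ⟨33353⟩;
    ⟨214840⟩, ⟨94445⟩, ⟨71796⟩, ⟨202938⟩, ⟨104264⟩, ⟨101275⟩;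
    ⟨185122⟩, ⟨109289⟩, ⟨234033⟩, ⟨6440⟩, ⟨218888⟩, ⟨140786⟩;
    ⟨45640⟩, ⟨148261⟩, ⟨182284⟩, ⟨198806⟩, ⟨34824⟩, ⟨221206⟩;
    ⟨217464⟩, ⟨254860⟩, ⟨250168⟩, ⟨137630⟩, ⟨121868⟩, ⟨28000⟩;
    ⟨69720⟩, ⟨181004⟩, ⟨184616⟩, ⟨133526⟩, ⟨55308⟩, ⟨27936⟩]

/-- The values of the secondary invariants at `basePoint`. -/
def secondaryValue : Fin 18 → BitRing :=
  ![⟨1⟩, ⟨2⟩, ⟨149796⟩, ⟨2084⟩, ⟨33281⟩, ⟨74896⟩, ⟨4⟩, ⟨37441⟩, ⟨4168⟩, ⟨8338⟩, ⟨65666⟩, ⟨2340⟩,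
    ⟨36872⟩, ⟨65680⟩, ⟨133156⟩, ⟨16676⟩, ⟨36928⟩, ⟨66706⟩]

/-- The rows of the inverse of the matrix of coefficients of `secondaryValue`. -/
def secondaryValueInv : Fin 18 → BitVec 18 :=
  ![1, 2, 64, 400, 9218, 49220, 70032, 140834, 2056, 65665, 139266, 49164, 69888, 131106, 18444,
    65680, 139808, 16392]

theorem linearIndependent_secondaryValue : LinearIndependent F2 secondaryValue :=
  BitRing.linearIndependent_of_digitMatrix_mul_eq_one
    (N := BitRing.digitMatrix secondaryValueInv) (by decide +kernel)

/-- The value of the form `pointForm v` at `w`. -/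
def pointValue {A : Type*} [CommRing A] [Algebra F2 A] (w : Fin 6 → A) (v : Point) : A :=
  ∑ i, quadCoords v.1 i • w i

theorem primaryInvariant_pointValue_basePoint :
    ∀ i, primaryInvariant (pointValue basePoint) i = algebraMap F2 BitRing (primaryValue i) := by
  decide +kernel

theorem snd_primaryInvariant_pointValue_basePoint : ∀ m i,
    (primaryInvariant (pointValue fun j => algebraMap BitRing BitRing[ε] (basePoint j)
      + ε * algebraMap BitRing BitRing[ε] (jacobianInv j m)) i).snd
        = (1 : Matrix (Fin 6) (Fin 6) BitRing) i m := by
  decide +kernel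

theorem secondaryInvariant_pointValue_basePoint :
    ∀ j, secondaryInvariant (pointValue basePoint) j = secondaryValue j := by
  decide +kernel

section

variable {A : Type*} [CommRing A] [Algebra F2 A] (w : Fin 6 → A)

theorem aeval_pointForm (v : Point) : aeval w (pointForm v) = pointValue w v := by
  simp only [pointForm, pointValue, map_sum, map_smul, aeval_X]

theorem aeval_primaryInvariant (i : Fin 6) :
    aeval w (primaryInvariant pointForm i) = primaryInvariant (pointValue w) i := by
  simp only [map_primaryInvariant, aeval_pointForm]

theorem aeval_secondaryInvariant (j : Fin 18) :
    aeval w (secondaryInvariant pointForm j) = secondaryInvariant (pointValue w) j := by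
  simp only [map_secondaryInvariant, aeval_pointForm]

end

theorem eq_zero_of_sum_aeval_primaryInvariant_mul {Q : Fin 18 → MvPolynomial (Fin 6) F2}
    (hQ : ∑ j, aeval (primaryInvariant pointForm) (Q j) * secondaryInvariant pointForm j = 0) :
    Q = 0 := by
  refine eq_zero_of_sum_aeval_mul_eq_zero (ξ := basePoint) (c := primaryValue) (N := jacobianInv)
    (fun i => ?_) (of_pderiv_mul_eq_one fun i m => ?_) ?_ hQ
  · rw [aeval_primaryInvariant, primaryInvariant_pointValue_basePoint]
  · rw [aeval_primaryInvariant, snd_primaryInvariant_pointValue_basePoint]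
  · simp only [aeval_secondaryInvariant, secondaryInvariant_pointValue_basePoint]
    exact linearIndependent_secondaryValue

end Specialization

section HironakaDecomposition

section

variable {ι κ k R S : Type*} [Fintype κ] [CommRing k] [CommRing R] [Algebra k R] [CommRing S]
  [Algebra k S]

/-- The map `(Qⱼ) ↦ ∑ j, Qⱼ(f) gⱼ`, whose bijectivity means that `f` is algebraically independent
and that `g` is a basis of `R` over `k[f]`. -/
noncomputable def hironakaMap (f : ι → R) (g : κ → R) : (κ → MvPolynomial ι k) →ₗ[k] R where
  toFun Q := ∑ j, aeval f (Q j) * g j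
  map_add' P Q := by simp only [Pi.add_apply, map_add, add_mul, Finset.sum_add_distrib]
  map_smul' c Q := by simp only [Pi.smul_apply, map_smul, smul_mul_assoc, Finset.smul_sum,
    RingHom.id_apply]

theorem hironakaMap_apply (f : ι → R) (g : κ → R) (Q : κ → MvPolynomial ι k) :
    hironakaMap f g Q = ∑ j, aeval f (Q j) * g j :=
  rfl

theorem hironakaMap_single [DecidableEq κ] (f : ι → R) (g : κ → R) (j : κ) (p : MvPolynomial ι k) :
    hironakaMap f g (Pi.single j p) = aeval f p * g j := by
  rw [hironakaMap_apply, Finset.sum_eq_single j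
    (fun i _ hi => by rw [Pi.single_eq_of_ne hi, map_zero, zero_mul])
    (fun hj => absurd (Finset.mem_univ j) hj), Pi.single_eq_same]

theorem map_hironakaMap (φ : R →ₐ[k] S) (f : ι → R) (g : κ → R) (Q : κ → MvPolynomial ι k) :
    φ (hironakaMap f g Q) = hironakaMap (fun i => φ (f i)) (fun j => φ (g j)) Q := by
  simp only [hironakaMap_apply, map_sum, map_mul, comp_aeval_apply]

theorem algebraicIndependent_of_hironakaMap_injective [Nonempty κ] {f : ι → R} {g : κ → R}
    (h : Function.Injective (hironakaMap (k := k) f g)) : AlgebraicIndependent k f := by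
  classical
  obtain ⟨j⟩ := ‹Nonempty κ›
  refine fun p q hpq => Pi.single_injective j (h ?_)
  rw [hironakaMap_single, hironakaMap_single, hpq]

theorem exists_basis_adjoin_of_hironakaMap_bijective {f : ι → R} {g : κ → R}
    (h : Function.Bijective (hironakaMap (k := k) f g)) :
    ∃ b : Module.Basis κ (Algebra.adjoin k (Set.range f)) R, ∀ j, b j = g j := by
  have aeval_mem (Q : MvPolynomial ι k) : aeval f Q ∈ Algebra.adjoin k (Set.range f) := by
    rw [Algebra.adjoin_range_eq_range_aeval]
    exact ⟨Q, rfl⟩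
  have linearIndependent : LinearIndependent (Algebra.adjoin k (Set.range f)) g := by
    refine Fintype.linearIndependent_iff.2 fun c hc j => Subtype.ext ?_
    have exists_aeval_eq (j : κ) : ∃ Q : MvPolynomial ι k, aeval f Q = (c j : R) :=
      (Algebra.adjoin_range_eq_range_aeval k f).le (c j).2
    choose Q hQ using exists_aeval_eq
    have hQ0 : Q = 0 := (map_eq_zero_iff _ h.1).1 <| by
      simp only [hironakaMap_apply, hQ]
      exact hc
    rw [← hQ, hQ0, Pi.zero_apply, map_zero, ZeroMemClass.coe_zero]
  have span_eq_top : ⊤ ≤ Submodule.span (Algebra.adjoin k (Set.range f)) (Set.range g) := by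
    rintro p -
    obtain ⟨Q, rfl⟩ := h.2 p
    exact sum_mem fun j _ => Submodule.smul_mem _
      (⟨_, aeval_mem (Q j)⟩ : Algebra.adjoin k (Set.range f)) (Submodule.subset_span ⟨j, rfl⟩)
  exact ⟨.mk linearIndependent span_eq_top, Module.Basis.mk_apply linearIndependent span_eq_top⟩

end

theorem linearIndependent_single_monomial {ι κ k : Type*} [Finite κ] [DecidableEq κ]
    [CommSemiring k] :
    LinearIndependent k fun x : Σ _ : κ, ι →₀ ℕ =>
      (Pi.single x.1 (monomial x.2 1) : κ → MvPolynomial ι k) := by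
  have := Fintype.ofFinite κ
  have coe_basis : ⇑(Pi.basis fun _ : κ => basisMonomials ι k)
      = fun x => (Pi.single x.1 (monomial x.2 (1 : k)) : κ → MvPolynomial ι k) :=
    funext fun x => by rw [Pi.basis_apply, coe_basisMonomials]
  rw [← coe_basis]
  exact Module.Basis.linearIndependent _

theorem isHomogeneous_aeval_monomial {ι σ k : Type*} [CommSemiring k] {f : ι → MvPolynomial σ k}
    {d : ι → ℕ} (hf : ∀ i, (f i).IsHomogeneous (d i)) (e : ι →₀ ℕ) :
    (aeval f (monomial e (1 : k))).IsHomogeneous (Finsupp.weight d e) := by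
  rw [aeval_monomial, map_one, one_mul, Finsupp.weight_apply]
  exact IsHomogeneous.prod _ _ _ fun i _ => by
    simpa only [smul_eq_mul, mul_comm] using (hf i).pow (e i)

theorem le_range_of_finrank_le {k V W ι : Type*} [Field k] [AddCommGroup V] [Module k V]
    [AddCommGroup W] [Module k W] [Finite ι] {φ : V →ₗ[k] W} (hφ : Function.Injective φ)
    {N : Submodule k W} [FiniteDimensional k N] {v : ι → V} (hv : LinearIndependent k v)
    (hN : ∀ x, φ (v x) ∈ N) (hcard : Module.finrank k N ≤ Nat.card ι) :
    N ≤ LinearMap.range φ := by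
  have := Fintype.ofFinite ι
  have span_le : Submodule.span k (Set.range (φ ∘ v)) ≤ N :=
    Submodule.span_le.2 (Set.range_subset_iff.2 hN)
  have span_eq : Submodule.span k (Set.range (φ ∘ v)) = N :=
    Submodule.eq_of_le_of_finrank_le span_le (by
      rwa [finrank_span_eq_card (hv.map' φ (LinearMap.ker_eq_bot.2 hφ)),
        ← Nat.card_eq_fintype_card])
  rw [← span_eq, Submodule.span_le]
  rintro _ ⟨x, rfl⟩
  exact LinearMap.mem_range_self φ (v x)

end HironakaDecomposition

section InvariantRing

theorem isHomogeneous_pointForm (v : Point) : (pointForm v).IsHomogeneous 1 :=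
  IsHomogeneous.sum _ _ _ fun i _ =>
    Submodule.smul_mem (homogeneousSubmodule (Fin 6) F2 1) _ (isHomogeneous_X F2 i)

variable {D : G3 →* GL (Fin 6) F2} (hA : (D Agen).1 = DA6) (hB : (D Bgen).1 = DB6)

/-- The primary invariants `f₁, …, f₆` in `S[W'^*]^G`. -/
noncomputable def primaryForm (i : Fin 6) : invG D :=
  ⟨primaryInvariant pointForm i, fun σ _ => by
    simp only [map_primaryInvariant, polyAct_pointForm hA hB, primaryInvariant_comp_smul]⟩

/-- The secondary invariants `g₁, …, g₁₈` in `S[W'^*]^G`. -/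
noncomputable def secondaryForm (j : Fin 18) : invG D :=
  ⟨secondaryInvariant pointForm j, fun σ _ => by
    simp only [map_secondaryInvariant, polyAct_pointForm hA hB, secondaryInvariant_comp_smul]⟩

theorem coe_hironakaMap_forms (Q : Fin 18 → MvPolynomial (Fin 6) F2) :
    (hironakaMap (primaryForm hA hB) (secondaryForm hA hB) Q : MvPolynomial (Fin 6) F2)
      = hironakaMap (primaryInvariant pointForm) (secondaryInvariant pointForm) Q :=
  map_hironakaMap (invG D).val _ _ Q

theorem hironakaMap_pointForm_injective :
    Function.Injective (hironakaMap (k := F2) (primaryInvariant pointForm)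
      (secondaryInvariant pointForm)) :=
  (injective_iff_map_eq_zero _).2 fun _ => eq_zero_of_sum_aeval_primaryInvariant_mul

theorem hironakaMap_single_monomial_mem_invGLE (hA : (D Agen).1 = DA6) (hB : (D Bgen).1 = DB6)
    {n : ℕ} (x : HironakaIndex n) :
    hironakaMap (k := F2) (primaryInvariant pointForm) (secondaryInvariant pointForm)
      (Pi.single x.1 (monomial x.2.1 1)) ∈ invGLE D n := by
  refine ⟨?_, (mem_restrictTotalDegree _ _ _).2 ?_⟩
  · rw [← coe_hironakaMap_forms hA hB]
    exact SetLike.coe_mem _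
  rw [hironakaMap_single]
  refine (IsHomogeneous.totalDegree_le (IsHomogeneous.mul
    (isHomogeneous_aeval_monomial (isHomogeneous_primaryInvariant isHomogeneous_pointForm) _)
    (isHomogeneous_secondaryInvariant isHomogeneous_pointForm _))).trans ?_
  exact (add_comm _ _).trans_le x.2.2

theorem invGLE_le_range_hironakaMap (hA : (D Agen).1 = DA6) (hB : (D Bgen).1 = DB6) (n : ℕ) :
    invGLE D n ≤ LinearMap.range (hironakaMap (k := F2) (primaryInvariant pointForm)
      (secondaryInvariant pointForm)) := by
  have injective : Function.Injective fun x : HironakaIndex n =>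
      (⟨x.1, x.2.1⟩ : Σ _ : Fin 18, Fin 6 →₀ ℕ) :=
    Function.Injective.sigma_map (β₂ := fun _ => Fin 6 →₀ ℕ) Function.injective_id
      fun _ => Subtype.val_injective
  have : FiniteDimensional F2 (invGLE D n) := Submodule.finiteDimensional_inf_right _ _
  exact le_range_of_finrank_le hironakaMap_pointForm_injective
    (linearIndependent_single_monomial.comp _ injective)
    (hironakaMap_single_monomial_mem_invGLE hA hB)
    ((finrank_invGLE_le hA hB n).trans_eq (card_hironakaIndex n).symm)

theorem hironakaMap_forms_bijective :
    Function.Bijective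
      (hironakaMap (k := F2) (primaryForm hA hB) (secondaryForm hA hB)) := by
  refine ⟨fun P Q h => hironakaMap_pointForm_injective ?_, fun p => ?_⟩
  · rw [← coe_hironakaMap_forms hA hB, h, coe_hironakaMap_forms]
  · obtain ⟨Q, hQ⟩ := invGLE_le_range_hironakaMap hA hB p.1.totalDegree
      ⟨p.2, (mem_restrictTotalDegree _ _ _).2 le_rfl⟩
    exact ⟨Q, Subtype.ext ((coe_hironakaMap_forms hA hB Q).trans hQ)⟩

end InvariantRing

/-- There exist a homogeneous system of parameters `f₁, …, f₆` of
`S[W'^*]^G` of degrees `2, 3, 3, 4, 6, 7` and homogeneous invariants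
`g₁, …, g₁₈ ∈ S[W'^*]^G` with `g₁ = 1`, of degrees
`0, 4, 5, 5, 6, 7, 8, 9, 9, 10, 10, 11, 12, 13, 14, 14, 15, 19` respectively, such that
`S[W'^*]^G` is a free `𝔽₂[f₁, …, f₆]`-module with basis `{g₁, …, g₁₈}`. -/
theorem stmt15 (D : G3 →* GL (Fin 6) F2)
    (hA : (D Agen : Matrix (Fin 6) (Fin 6) F2) = DA6)
    (hB : (D Bgen : Matrix (Fin 6) (Fin 6) F2) = DB6) :
    ∃ f : Fin 6 → (invG D),
      AlgebraicIndependent F2 f ∧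
      (∀ i, (f i : MvPolynomial (Fin 6) F2).IsHomogeneous (![2, 3, 3, 4, 6, 7] i)) ∧
      Module.Finite (Algebra.adjoin F2 (Set.range f)) (invG D) ∧
      ∃ g : Fin 18 → (invG D),
        g 0 = 1 ∧
        (∀ j, (g j : MvPolynomial (Fin 6) F2).IsHomogeneous
          (![0, 4, 5, 5, 6, 7, 8, 9, 9, 10, 10, 11, 12, 13, 14, 14, 15, 19] j)) ∧
        ∃ b : Module.Basis (Fin 18) (Algebra.adjoin F2 (Set.range f)) (invG D),
          ∀ j, b j = g j := by
  have bijective := hironakaMap_forms_bijective hA hB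
  obtain ⟨b, hb⟩ := exists_basis_adjoin_of_hironakaMap_bijective bijective
  exact ⟨primaryForm hA hB, algebraicIndependent_of_hironakaMap_injective bijective.injective,
    isHomogeneous_primaryInvariant isHomogeneous_pointForm, .of_basis b, secondaryForm hA hB,
    rfl, isHomogeneous_secondaryInvariant isHomogeneous_pointForm, b, hb⟩
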